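/- arXiv:2209.00418 — 2 statements merged into one kernel-verified Lean document; each statement's English description precedes it below -/
import Mathlib

section
/- For every n ≥ 1 and every increment function δ of size n, the alt-Tamari poset Tam^δ_n contains exactly (1/(n+1))·binomial(2n,n) linear intervals of height 0, exactly binomial(2n−1, n−2) linear intervals of height 1, exactly 2·binomial(2n−k, n−k−1) linear intervals of height k for each k with 2 ≤ k < n, and no linear intervals of height k ≥ n. -/
/-!
Common definitions.  A letter of a word is a `Bool`: `true` is an up step `u`,
`false` is a down step `d`.  Positions in words are 0-based.
-/

/-- A (possibly empty) Dyck word: as many `u`'s as `d`'s, and every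
prefix has at least as many `u`'s as `d`'s. -/
def IsDyckPath (w : List Bool) : Prop :=
  w.count true = w.count false ∧ ∀ p, p <+: w → p.count false ≤ p.count true

/-- A Dyck word of size `n`: `n` up steps, `n` down steps, every prefix has
at least as many `u`'s as `d`'s. -/
def IsDyckWord (n : ℕ) (w : List Bool) : Prop :=
  w.count true = n ∧ w.count false = n ∧ ∀ p, p <+: w → p.count false ≤ p.count true

/-- The set of Dyck words of size `n`. -/
def DyckSet (n : ℕ) : Set (List Bool) := {w | IsDyckWord n w}

/-- An increment function: a `{0,1}`-valued function (the paper's `δ : {1,…,n} → {0,1}`;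
only the values on `{1,…,n}` are ever used). -/
def IsIncFun (δ : ℕ → ℤ) : Prop := ∀ i, δ i = 0 ∨ δ i = 1

/-- The 0-based position in `w` of the `i`-th up step `u_i` (`i` is 1-based). -/
def upPos (w : List Bool) (i : ℕ) : ℕ :=
  ((List.range w.length).filter fun q => w.getD q false = true).getD (i - 1) 0

/-- `h_i(w)`: the (1-based, between 1 and 2n) position of the up step `u_i` in `w`. -/
def hpos (w : List Bool) (i : ℕ) : ℕ := upPos w i + 1

/-- The change of δ-altitude produced by the letter at position `q` of `w`:
the up step `u_i` contributes `δ i`, a down step contributes `-1`. -/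
def stepVal (δ : ℕ → ℤ) (w : List Bool) (q : ℕ) : ℤ :=
  if w.getD q false = true then δ ((w.take (q + 1)).count true) else -1

/-- The δ-elevation of the factor of `w` occupying positions `a, …, b-1`. -/
def elev (δ : ℕ → ℤ) (w : List Bool) (a b : ℕ) : ℤ :=
  ∑ q ∈ Finset.Ico a b, stepVal δ w q

/-- `C` is the δ-excursion of the up step of `w` at position `p`:
the smallest (nonempty) factor of `w` starting at `p` whose δ-elevation is `0`. -/
def IsDeltaExcAt (δ : ℕ → ℤ) (w : List Bool) (p : ℕ) (C : List Bool) : Prop :=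
  w.getD p false = true ∧
  ∃ m, 0 < m ∧ p + m ≤ w.length ∧ C = (w.drop p).take m ∧
    elev δ w p (p + m) = 0 ∧ ∀ m', 0 < m' → m' < m → elev δ w p (p + m') ≠ 0

/-- `C` is the excursion of the up step of `w` at position `p`: the smallest factor
of `w` starting at `p` that is itself a Dyck word. -/
def IsExcursionAt (w : List Bool) (p : ℕ) (C : List Bool) : Prop :=
  w.getD p false = true ∧
  ∃ m, 0 < m ∧ p + m ≤ w.length ∧ C = (w.drop p).take m ∧ IsDyckPath C ∧
    ∀ m', 0 < m' → m' < m → ¬ IsDyckPath ((w.drop p).take m')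

/-- `ℓ_i(w; δ)`: the length of the δ-excursion of `u_i` in `w`. -/
noncomputable def excLen (δ : ℕ → ℤ) (w : List Bool) (i : ℕ) : ℕ :=
  sInf {m | 0 < m ∧ elev δ w (upPos w i) (upPos w i + m) = 0}

/-- `Q` is the δ-rotation of `P` at some up step: `P = A d C B` with `d u_i` a valley
and `C` the δ-excursion of `u_i`, and `Q = A C d B`. -/
def DeltaRot (δ : ℕ → ℤ) (P Q : List Bool) : Prop :=
  ∃ A C B, P = A ++ false :: (C ++ B) ∧ Q = A ++ (C ++ false :: B) ∧
    IsDeltaExcAt δ P (A.length + 1) C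

/-- The alt-Tamari order `Tam^δ`: reflexive transitive closure of δ-rotations. -/
def altLE (δ : ℕ → ℤ) : List Bool → List Bool → Prop :=
  Relation.ReflTransGen (DeltaRot δ)

/-- The Tamari order: the alt-Tamari order for `δ ≡ 1` (the δ-excursion of any up step
is then its excursion). -/
def tamLE : List Bool → List Bool → Prop := altLE fun _ => 1

/-- The height (number of `u`'s minus number of `d`'s) of the length-`j` prefix of `w`. -/
def prefHeight (w : List Bool) (j : ℕ) : ℤ :=
  ((w.take j).count true : ℤ) - ((w.take j).count false : ℤ)

/-- The Dyck (inclusion) order: every prefix height of `P` is at most that of `Q`. -/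
def dyckLE (P Q : List Bool) : Prop := ∀ j, prefHeight P j ≤ prefHeight Q j

/-- Strict version of a relation `le`. -/
def ltOf (le : List Bool → List Bool → Prop) (P Q : List Bool) : Prop :=
  le P Q ∧ ¬ le Q P

/-- There is a strict chain `P = c 0 < c 1 < ⋯ < c k = Q` inside `S`. -/
def HasChainIn (S : Set (List Bool)) (le : List Bool → List Bool → Prop)
    (P Q : List Bool) (k : ℕ) : Prop :=
  ∃ c : ℕ → List Bool, c 0 = P ∧ c k = Q ∧ (∀ i ≤ k, c i ∈ S) ∧
    ∀ i < k, ltOf le (c i) (c (i + 1))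

/-- The interval `[P,Q]` of the poset `(S, le)` has height `k`: `k` is the maximal
length of a chain from `P` to `Q`. -/
def IntervalHeight (S : Set (List Bool)) (le : List Bool → List Bool → Prop)
    (P Q : List Bool) (k : ℕ) : Prop :=
  HasChainIn S le P Q k ∧ ∀ m, HasChainIn S le P Q m → m ≤ k

/-- The interval `[P,Q]` of the poset `(S, le)` is linear: it is totally ordered. -/
def LinearInterval (S : Set (List Bool)) (le : List Bool → List Bool → Prop)
    (P Q : List Bool) : Prop :=
  P ∈ S ∧ Q ∈ S ∧ le P Q ∧
  ∀ R R', R ∈ S → R' ∈ S → le P R → le R Q → le P R' → le R' Q → le R R' ∨ le R' R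

/-- `Q` covers `P` in the poset `(S, le)`. -/
def CovIn (S : Set (List Bool)) (le : List Bool → List Bool → Prop)
    (P Q : List Bool) : Prop :=
  P ∈ S ∧ Q ∈ S ∧ ltOf le P Q ∧ ∀ R ∈ S, ¬ (ltOf le P R ∧ ltOf le R Q)

/-- The number of valleys (factors `du`) of `w`. -/
def valleys (w : List Bool) : ℕ :=
  ((List.range w.length).filter fun q => !w.getD q true && w.getD (q + 1) false).length

namespace AltTamari

/-! ### Down-step vectors and their rotations -/

section Vectors

variable {n : ℕ} {E a b c d : ℕ → ℤ} {i j k l i' j' : ℕ}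

/-- `a` lowered by `k` on the index range `[i, j)`. -/
def lower (a : ℕ → ℤ) (i j : ℕ) (k : ℤ) : ℕ → ℤ :=
  fun m => if i ≤ m ∧ m < j then a m - k else a m

theorem lower_apply (a : ℕ → ℤ) (i j : ℕ) (k : ℤ) (m : ℕ) :
    lower a i j k m = if i ≤ m ∧ m < j then a m - k else a m := rfl

/-- The up steps of index in `[i, j)` are those of the excursion of the up step of index `i`.
Here `a m` counts the down steps before the up step of index `m`, and `E m - a m` is the
altitude at which that step starts. -/
def Block (n : ℕ) (E a : ℕ → ℤ) (i j : ℕ) : Prop :=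
  i < j ∧ j ≤ n ∧ (∀ m, i < m → m < j → E i - a i < E m - a m) ∧
    (j < n → E j - a j ≤ E i - a i)

/-- The rotation at the up step of index `i`, whose excursion has up steps `[i, j)`. -/
def RotAt (n : ℕ) (E : ℕ → ℤ) (i j : ℕ) (a b : ℕ → ℤ) : Prop :=
  0 < i ∧ a (i - 1) < a i ∧ Block n E a i j ∧ b = lower a i j 1

/-- Rotation of vectors. -/
def Rot (n : ℕ) (E : ℕ → ℤ) (a b : ℕ → ℤ) : Prop := ∃ i j, RotAt n E i j a b

/-- `k` consecutive excursions starting at the up step of index `i`, with up steps `[i, j)`. -/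
def Chain (n : ℕ) (E a : ℕ → ℤ) : ℕ → ℕ → ℕ → Prop
  | 0, i, j => i = j
  | k + 1, i, j => ∃ l, Block n E a i l ∧ Chain n E a k l j ∧ (0 < k → E l - a l = E i - a i)

/-- `b` arises from `a` by moving an excursion before `k` down steps. -/
def IsLeft (n : ℕ) (E : ℕ → ℤ) (k i : ℕ) (a b : ℕ → ℤ) : Prop :=
  0 < i ∧ a (i - 1) + k ≤ a i ∧ ∃ j, Block n E a i j ∧ b = lower a i j k

/-- `b` arises from `a` by moving `k` consecutive excursions before one down step. -/
def IsRight (n : ℕ) (E : ℕ → ℤ) (k i : ℕ) (a b : ℕ → ℤ) : Prop :=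
  0 < i ∧ a (i - 1) < a i ∧ ∃ j, Chain n E a k i j ∧ b = lower a i j 1

/-- There is a path of `k` steps from `a` to `b` each of which is the only possible
step towards `b`. -/
def UniquePath {α : Type*} (R : α → α → Prop) : ℕ → α → α → Prop
  | 0, a, b => a = b
  | k + 1, a, b => ∃ c, R a c ∧ UniquePath R k c b ∧
      ∀ c', R a c' → Relation.ReflTransGen R c' b → c' = c

theorem UniquePath.le {α : Type*} {R : α → α → Prop} {k : ℕ} {a b : α}
    (h : UniquePath R k a b) : Relation.ReflTransGen R a b := by
  induction k generalizing a with
  | zero => exact h ▸ .refl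
  | succ k ih =>
    obtain ⟨c, h1, h2, -⟩ := h
    exact .head h1 (ih h2)

theorem Block.unique (h : Block n E a i j) (h' : Block n E a i j') : j = j' := by
  obtain ⟨h1, h2, h3, h4⟩ := h
  obtain ⟨g1, g2, g3, g4⟩ := h'
  rcases lt_trichotomy j j' with hl | hl | hl
  · have := g3 j h1 hl
    have := h4 (by omega)
    omega
  · exact hl
  · have := h3 j' g1 hl
    have := g4 (by omega)
    omega

theorem exists_block (E a : ℕ → ℤ) (h : i < n) : ∃ j, Block n E a i j := by
  classical
  have hex : ∃ j, i < j ∧ (j < n → E j - a j ≤ E i - a i) := ⟨n, h, by omega⟩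
  refine ⟨Nat.find hex, (Nat.find_spec hex).1, Nat.find_min' hex ⟨h, by omega⟩, ?_,
    (Nat.find_spec hex).2⟩
  intro m h1 h2
  have := Nat.find_min hex h2
  grind

theorem RotAt.unique (h : RotAt n E i j a b) (h' : RotAt n E i j' a c) : b = c := by
  obtain ⟨-, -, h1, rfl⟩ := h
  obtain ⟨-, -, h2, rfl⟩ := h'
  rw [h1.unique h2]

theorem Rot.apply_le (h : Rot n E a b) (m : ℕ) : b m ≤ a m := by
  obtain ⟨i, j, -, -, -, rfl⟩ := h
  rw [lower_apply]
  split_ifs <;> omega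

theorem apply_le_of_le (h : Relation.ReflTransGen (Rot n E) a b) (m : ℕ) : b m ≤ a m := by
  induction h with
  | refl => exact le_rfl
  | tail _ h ih => exact (h.apply_le m).trans ih

/-- Within the beginning of an excursion, moving up in the order lowers every entry
at least as much as the first one. -/
theorem sub_le_sub_of_le (h : Relation.ReflTransGen (Rot n E) a b)
    (hp : ∀ m, i < m → m < j → E i - a i < E m - a m) {m : ℕ} (h1 : i < m) (h2 : m < j)
    (hj : j ≤ n) : a i - b i ≤ a m - b m := by
  induction h using Relation.ReflTransGen.head_induction_on with
  | refl => omega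
  | @head a c hac _ ih =>
    obtain ⟨i', j', -, -, ⟨g1, g2, g3, g4⟩, rfl⟩ := hac
    have key : ∀ m, i < m → m < j → i' ≤ i → i < j' → m < j' := by
      intro m hm hmj hi hij
      by_contra hcon
      have e1 := g4 (by omega)
      have e2 := hp j' (by omega) (by omega)
      rcases hi.eq_or_lt with rfl | hi
      · omega
      · have := g3 i hi hij
        omega
    have := ih (by
      intro m hm hmj
      have := key m hm hmj
      have := hp m hm hmj
      simp only [lower_apply]
      split_ifs <;> omega)
    have := key m h1 h2
    simp only [lower_apply] at this ⊢ ih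
    grind [lower_apply]

theorem Rot.ne (h : Rot n E a b) : a ≠ b := by
  obtain ⟨i, j, -, -, ⟨h1, -⟩, rfl⟩ := h
  intro h
  have := congrFun h i
  rw [lower_apply, if_pos (by omega)] at this
  omega

theorem IsLeft.apply_lt (hk : 0 < k) (h : IsLeft n E k i a b) : b i < a i := by
  obtain ⟨-, -, j, ⟨h1, -⟩, rfl⟩ := h
  rw [lower_apply, if_pos (by omega)]
  omega

theorem IsLeft.apply_eq (h : IsLeft n E k i a b) {m : ℕ} (hm : m < i) : b m = a m := by
  obtain ⟨-, -, j, ⟨h1, -⟩, rfl⟩ := h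
  rw [lower_apply, if_neg (by omega)]

theorem Chain.add_le (h : Chain n E a k i j) : i + k ≤ j := by
  induction k generalizing i with
  | zero => exact (show i = j from h).le
  | succ k ih =>
    obtain ⟨l, h1, h2, -⟩ := h
    have := ih h2
    have := h1.1
    omega

theorem Chain.le_size (h : Chain n E a (k + 1) i j) : j ≤ n := by
  induction k generalizing i with
  | zero =>
    obtain ⟨l, h1, h2, -⟩ := h
    exact (show l = j from h2) ▸ h1.2.1
  | succ k ih =>
    obtain ⟨l, -, h2, -⟩ := h
    exact ih h2

theorem Chain.unique (h : Chain n E a k i j) (h' : Chain n E a k i j') : j = j' := by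
  induction k generalizing i with
  | zero => exact (show i = j from h).symm.trans h'
  | succ k ih =>
    obtain ⟨l, h1, h2, -⟩ := h
    obtain ⟨l', h1', h2', -⟩ := h'
    rw [h1.unique h1'] at h2
    exact ih h2 h2'

theorem Chain.congr (h : Chain n E a k i j) (hab : ∀ m, i ≤ m → b m = a m) :
    Chain n E b k i j := by
  induction k generalizing i with
  | zero => exact h
  | succ k ih =>
    obtain ⟨l, ⟨h1, h2, h3, h4⟩, h5, h6⟩ := h
    refine ⟨l, ⟨h1, h2, ?_, ?_⟩, ih h5 fun m hm => hab m (by omega), ?_⟩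
    · intro m hm hl
      rw [hab i le_rfl, hab m hm.le]
      exact h3 m hm hl
    · rw [hab i le_rfl, hab l h1.le]
      exact h4
    · rw [hab i le_rfl, hab l h1.le]
      exact h6

/-- Every up step of a chain of excursions but the first one is in, or just after,
an earlier excursion. -/
theorem Chain.exists_lt (h : Chain n E a k i j) {m : ℕ} (h1 : i < m) (h2 : m < j) :
    ∃ p, i ≤ p ∧ p < m ∧ E p - a p ≤ E m - a m ∧
      ∀ q, p < q → q < m → E p - a p < E q - a q := by
  induction k generalizing i with
  | zero => have : i = j := h; omega
  | succ k ih =>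
    obtain ⟨l, ⟨g1, g2, g3, g4⟩, h5, h6⟩ := h
    rcases lt_trichotomy m l with hm | rfl | hm
    · exact ⟨i, le_rfl, h1, (g3 m h1 hm).le, fun q hq hqm => g3 q hq (by omega)⟩
    · have : 0 < k := by
        rcases Nat.eq_zero_or_pos k with rfl | hk
        · have : m = j := h5
          omega
        · exact hk
      exact ⟨i, le_rfl, h1, (h6 this).ge, g3⟩
    · obtain ⟨p, hp, hp'⟩ := ih h5 hm
      exact ⟨p, by omega, hp'⟩

theorem IsRight.apply_lt (hk : 0 < k) (h : IsRight n E k i a b) : b i < a i := by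
  obtain ⟨-, -, j, h, rfl⟩ := h
  have := h.add_le
  rw [lower_apply, if_pos (by omega)]
  omega

theorem IsRight.apply_eq (h : IsRight n E k i a b) {m : ℕ} (hm : m < i) : b m = a m := by
  obtain ⟨-, -, j, -, rfl⟩ := h
  rw [lower_apply, if_neg (by omega)]

theorem IsLeft.unique (h : IsLeft n E k i a b) (h' : IsLeft n E k i a c) : b = c := by
  obtain ⟨-, -, j, h, rfl⟩ := h
  obtain ⟨-, -, j', h', rfl⟩ := h'
  rw [h.unique h']

theorem IsRight.unique (h : IsRight n E k i a b) (h' : IsRight n E k i a c) : b = c := by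
  obtain ⟨-, -, j, h, rfl⟩ := h
  obtain ⟨-, -, j', h', rfl⟩ := h'
  rw [h.unique h']

theorem isLeft_one_iff : IsLeft n E 1 i a b ↔ ∃ j, RotAt n E i j a b := by
  simp only [IsLeft, RotAt, Nat.cast_one, Int.add_one_le_iff]
  grind

theorem isRight_one_iff : IsRight n E 1 i a b ↔ ∃ j, RotAt n E i j a b := by
  simp only [IsRight, RotAt, Chain]
  grind

theorem Block.lower (h : Block n E a i j) : Block n E (lower a i j 1) i j := by
  obtain ⟨h1, h2, h3, h4⟩ := h
  refine ⟨h1, h2, fun m hm hmj => ?_, fun hj => ?_⟩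
  · have := h3 m hm hmj
    simp only [lower_apply]
    split_ifs <;> omega
  · have := h4 hj
    simp only [lower_apply]
    split_ifs <;> omega

theorem isLeft_lower (h0 : 0 < i) (hv : a (i - 1) + (k + 1 : ℕ) ≤ a i) (hB : Block n E a i j) :
    RotAt n E i j a (lower a i j 1) ∧
      IsLeft n E k i (lower a i j 1) (lower a i j (k + 1 : ℕ)) := by
  have h1 := hB.1
  refine ⟨⟨h0, by push_cast at hv; omega, hB, rfl⟩, h0, ?_, j, hB.lower, ?_⟩
  · simp only [lower_apply]
    push_cast at hv
    split_ifs <;> omega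
  · funext m
    simp only [lower_apply]
    push_cast
    split_ifs <;> omega

theorem IsLeft.uniquePath (h : IsLeft n E k i a b) : UniquePath (Rot n E) k a b := by
  induction k generalizing a with
  | zero =>
    obtain ⟨-, -, j, -, rfl⟩ := h
    funext m
    simp [lower_apply]
  | succ k ih =>
    obtain ⟨h0, hv, j, hB, rfl⟩ := h
    obtain ⟨hrot, hleft⟩ := isLeft_lower h0 hv hB
    obtain ⟨h1, h2, h3, h4⟩ := hB
    refine ⟨lower a i j 1, ⟨i, j, hrot⟩, ih hleft, ?_⟩
    rintro c ⟨i', j', hc⟩ hle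
    suffices i' = i by
      subst this
      exact hc.unique hrot
    obtain ⟨g0, gv, ⟨g1, g2, g3, g4⟩, rfl⟩ := hc
    have hle' := apply_le_of_le hle i'
    rw [lower_apply, lower_apply, if_pos (c := i' ≤ i' ∧ i' < j') (by omega)] at hle'
    by_contra hne
    have hmem : i ≤ i' ∧ i' < j := by
      by_contra hcon
      rw [if_neg hcon] at hle'
      omega
    have hstep : Relation.ReflTransGen (Rot n E) a (lower a i' j' 1) :=
      .single ⟨i', j', g0, gv, ⟨g1, g2, g3, g4⟩, rfl⟩
    have hD := sub_le_sub_of_le (i := i) (j := j) (m := i') hle ?_ (by omega) hmem.2 h2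
    · simp only [lower_apply] at hD
      push_cast at hD
      split_ifs at hD <;> omega
    · intro m hm hmj
      have e1 := h3 m hm hmj
      have e2 := sub_le_sub_of_le hstep h3 hm hmj h2
      omega

theorem Rot.monotone (hmono : ∀ m, m + 1 < n → a m ≤ a (m + 1)) (h : Rot n E a b) :
    ∀ m, m + 1 < n → b m ≤ b (m + 1) := by
  obtain ⟨i, j, h0, hv, -, rfl⟩ := h
  intro m hm
  have := hmono m hm
  have : m + 1 = i → a m < a (m + 1) := by rintro rfl; exact hv
  simp only [lower_apply]
  split_ifs <;> omega

theorem isRight_lower (hmono : ∀ m, m + 1 < n → a m ≤ a (m + 1)) (hB : Block n E a i l)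
    (hC : Chain n E a k l j) (hk : 0 < k) :
    IsRight n E k l (lower a i l 1) (lower a i j 1) := by
  obtain ⟨k, rfl⟩ : ∃ k', k = k' + 1 := ⟨k - 1, by omega⟩
  have h1 := hB.1
  have h2 := hC.add_le
  have h3 := hC.le_size
  refine ⟨by omega, ?_, j, hC.congr fun m hm => ?_, ?_⟩
  · have := hmono (l - 1) (by omega)
    rw [show l - 1 + 1 = l by omega] at this
    simp only [lower_apply]
    split_ifs <;> omega
  · rw [lower_apply, if_neg (by omega)]
  · funext m
    simp only [lower_apply]
    split_ifs <;> omega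

theorem IsRight.uniquePath (hmono : ∀ m, m + 1 < n → a m ≤ a (m + 1))
    (h : IsRight n E k i a b) : UniquePath (Rot n E) k a b := by
  induction k generalizing a i with
  | zero =>
    obtain ⟨-, -, j, h, rfl⟩ := h
    have : i = j := h
    funext m
    simp only [lower_apply]
    rw [if_neg (by omega)]
  | succ k ih =>
    obtain ⟨h0, hv, j, hC, rfl⟩ := h
    have hjn := hC.le_size
    have hC' := hC
    obtain ⟨l, hB, hC1, he⟩ := hC'
    have hB' := hB
    obtain ⟨h1, h2, h3, h4⟩ := hB'
    have hrot : RotAt n E i l a (lower a i l 1) := ⟨h0, hv, hB, rfl⟩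
    refine ⟨lower a i l 1, ⟨i, l, hrot⟩, ?_, ?_⟩
    · rcases Nat.eq_zero_or_pos k with rfl | hk
      · rw [show l = j from hC1]
        rfl
      exact ih (Rot.monotone hmono ⟨i, l, hrot⟩) (isRight_lower hmono hB hC1 hk)
    · rintro c ⟨i', j', hc⟩ hle
      suffices i' = i by
        subst this
        exact hc.unique hrot
      obtain ⟨g0, gv, ⟨g1, g2, g3, g4⟩, rfl⟩ := hc
      have hle' := apply_le_of_le hle i'
      rw [lower_apply, lower_apply, if_pos (c := i' ≤ i' ∧ i' < j') (by omega)] at hle'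
      by_contra hne
      have hmem : i ≤ i' ∧ i' < j := by
        by_contra hcon
        rw [if_neg hcon] at hle'
        omega
      obtain ⟨p, p1, p2, p3, p4⟩ := hC.exists_lt (m := i') (by omega) hmem.2
      have hD := sub_le_sub_of_le (i := p) (j := i' + 1) (m := i') hle ?_ p2 (by omega) (by omega)
      · simp only [lower_apply] at hD
        split_ifs at hD <;> omega
      · intro m hm hmj
        have := p4 m hm
        have : m = i' → E p - a p ≤ E m - a m := by rintro rfl; exact p3
        simp only [lower_apply]
        split_ifs <;> omega

theorem Rot.eq_of_le (h : Rot n E a b) (h' : Rot n E a c)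
    (hbc : Relation.ReflTransGen (Rot n E) b c) : b = c := by
  obtain ⟨i, j, h'⟩ := h'
  obtain ⟨d, -, hd, hu⟩ := (isLeft_one_iff.2 ⟨j, h'⟩).uniquePath
  exact (hu b h hbc).trans hd

/-- Two successive rotations that are neither at the same up step nor at consecutive
excursions can be started with the second one. -/
theorem RotAt.exchange (hE : Monotone E) (h : RotAt n E i j a b) (h' : RotAt n E i' j' b c)
    (hne : i' ≠ i) (hadj : ¬ (i' = j ∧ E j - a j = E i - a i)) :
    ∃ d, (∃ l, RotAt n E i' l a d) ∧ Relation.ReflTransGen (Rot n E) d c := by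
  obtain ⟨h0, hv, ⟨h1, h2, h3, h4⟩, rfl⟩ := h
  obtain ⟨g0, gv, ⟨g1, g2, g3, g4⟩, rfl⟩ := h'
  have commute : Block n E a i' j' → a (i' - 1) < a i' →
      Block n E (lower a i' j' 1) i j → lower a i' j' 1 (i - 1) < lower a i' j' 1 i →
      ∃ d, (∃ l, RotAt n E i' l a d) ∧
        Relation.ReflTransGen (Rot n E) d (lower (lower a i j 1) i' j' 1) := by
    intro b1 v1 b2 v2
    refine ⟨_, ⟨j', g0, v1, b1, rfl⟩, .single ⟨i, j, h0, v2, b2, ?_⟩⟩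
    funext m
    simp only [lower_apply]
    split_ifs <;> omega
  rcases lt_or_gt_of_ne hne with hlt | hgt
  · rcases le_or_gt j' i with hji | hij
    · apply commute <;> simp only [Block, lower_apply] at * <;> grind
    · have hee : E i' - a i' ≤ E i - a i := by
        have := g3 i hlt hij
        simp only [lower_apply] at this
        split_ifs at this <;> omega
      have hjj : j ≤ j' := by
        by_contra hcon
        have e1 := g4 (by omega)
        have e2 := h3 j' hij (by omega)
        simp only [lower_apply] at e1
        split_ifs at e1 <;> omega
      rcases hee.eq_or_lt with hee | hee
      · have hj' : j' = j := by
          by_contra hcon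
          have e1 := g3 j (by omega) (by omega)
          have e2 := h4 (by omega)
          simp only [lower_apply] at e1
          split_ifs at e1 <;> omega
        subst hj'
        refine ⟨lower a i' i 1, ⟨i, g0, ?_, ⟨hlt, by omega, ?_, ?_⟩, rfl⟩, ?_⟩
        · simp only [lower_apply] at gv
          split_ifs at gv <;> omega
        · intro m hm hmi
          have := g3 m hm (by omega)
          simp only [lower_apply] at this
          split_ifs at this <;> omega
        · omega
        · have hl : IsLeft n E 2 i (lower a i' i 1) (lower (lower a i' i 1) i j' 2) := by
            refine ⟨h0, ?_, j', ⟨h1, h2, ?_, ?_⟩, by norm_num⟩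
            · simp only [lower_apply]
              push_cast
              split_ifs <;> omega
            · intro m hm hmj
              have := h3 m hm hmj
              simp only [lower_apply]
              split_ifs <;> omega
            · intro hj
              have := h4 hj
              simp only [lower_apply]
              split_ifs <;> omega
          convert hl.uniquePath.le using 1
          funext m
          simp only [lower_apply]
          split_ifs <;> omega
      · apply commute <;> simp only [Block, lower_apply] at * <;> grind
  · rcases lt_trichotomy i' j with hij | rfl | hij
    · have hjj : j' ≤ j := by
        by_contra hcon
        have e1 := g3 j (by omega) (by omega)
        have e2 := h4 (by omega)
        have e3 := h3 i' (by omega) (by omega)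
        simp only [lower_apply] at e1
        split_ifs at e1 <;> omega
      apply commute <;> simp only [Block, lower_apply] at * <;> grind
    · have hlt : E i' - a i' < E i - a i := by
        have := h4 (by omega)
        omega
      have hv' : a (i' - 1) < a i' := by
        have e1 := hE (show i' - 1 ≤ i' by omega)
        have e2 : E i - a i ≤ E (i' - 1) - a (i' - 1) := by
          rcases (show i ≤ i' - 1 by omega).eq_or_lt with h | h
          · rw [← h]
          · exact (h3 _ h (by omega)).le
        omega
      apply commute <;> simp only [Block, lower_apply] at * <;> grind
    · apply commute <;> simp only [Block, lower_apply] at * <;> grind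

/-- A rotation followed by several rotations at the next excursion can be started with one
of the latter. -/
theorem RotAt.exchange_isLeft (h : RotAt n E i j a b) (h' : IsLeft n E (k + 2) j b c)
    (he : E j - a j = E i - a i) :
    ∃ d, (∃ l, RotAt n E j l a d) ∧ Relation.ReflTransGen (Rot n E) d c := by
  obtain ⟨h0, hv, ⟨h1, h2, h3, h4⟩, rfl⟩ := h
  obtain ⟨g0, gv, l, ⟨g1, g2, g3, g4⟩, rfl⟩ := h'
  have hB : Block n E a j l := by
    refine ⟨g1, g2, fun m hm hml => ?_, fun hl => ?_⟩
    · have := g3 m hm hml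
      simp only [lower_apply] at this
      split_ifs at this <;> omega
    · have := g4 hl
      simp only [lower_apply] at this
      split_ifs at this <;> omega
  have hvj : a (j - 1) + (k + 1) ≤ a j := by
    simp only [lower_apply] at gv
    push_cast at gv
    split_ifs at gv <;> omega
  obtain ⟨b1, b2, b3, b4⟩ := hB
  refine ⟨lower a j l 1, ⟨l, g0, by omega, ⟨b1, b2, b3, b4⟩, rfl⟩, ?_⟩
  have hrot : Rot n E (lower a j l 1) (lower (lower a j l 1) i l 1) := by
    refine ⟨i, l, h0, ?_, ⟨by omega, b2, fun m hm hml => ?_, fun hl => ?_⟩, rfl⟩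
    · simp only [lower_apply]
      split_ifs <;> omega
    · have e1 := h3 m hm
      have e2 := b3 m
      have e3 : m = j → E m - a m = E i - a i := by rintro rfl; exact he
      simp only [lower_apply]
      split_ifs <;> omega
    · have := b4 hl
      simp only [lower_apply]
      split_ifs <;> omega
  have hleft : IsLeft n E k j (lower (lower a j l 1) i l 1) (lower (lower a i j 1) j l (k + 2 : ℕ)) := by
    refine ⟨g0, ?_, l, ⟨b1, b2, fun m hm hml => ?_, fun hl => ?_⟩, ?_⟩
    · simp only [lower_apply]
      split_ifs <;> omega
    · have := b3 m hm hml
      simp only [lower_apply]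
      split_ifs <;> omega
    · have := b4 hl
      simp only [lower_apply]
      split_ifs <;> omega
    · funext m
      simp only [lower_apply]
      push_cast
      split_ifs <;> omega
  exact .head hrot hleft.uniquePath.le

theorem IsLeft.exists_rotAt (h : IsLeft n E (k + 1) i a b) :
    ∃ j c, RotAt n E i j a c ∧ Relation.ReflTransGen (Rot n E) c b := by
  obtain ⟨h0, hv, j, hB, rfl⟩ := h
  obtain ⟨hrot, hleft⟩ := isLeft_lower h0 hv hB
  exact ⟨j, _, hrot, hleft.uniquePath.le⟩

theorem IsRight.exists_rotAt (hmono : ∀ m, m + 1 < n → a m ≤ a (m + 1))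
    (h : IsRight n E (k + 1) i a b) :
    ∃ j c, RotAt n E i j a c ∧ Relation.ReflTransGen (Rot n E) c b := by
  obtain ⟨h0, hv, j, ⟨l, hB, hC, he⟩, rfl⟩ := h
  have hrot : RotAt n E i l a (lower a i l 1) := ⟨h0, hv, hB, rfl⟩
  refine ⟨l, _, hrot, ?_⟩
  rcases Nat.eq_zero_or_pos k with rfl | hk
  · rw [show l = j from hC]
  · exact ((isRight_lower hmono hB hC hk).uniquePath (Rot.monotone hmono ⟨i, l, hrot⟩)).le

theorem UniquePath.isLeft_or_isRight (hE : Monotone E)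
    (hmono : ∀ m, m + 1 < n → a m ≤ a (m + 1)) (h : UniquePath (Rot n E) (k + 1) a b) :
    (∃ i, IsLeft n E (k + 1) i a b) ∨ ∃ i, IsRight n E (k + 1) i a b := by
  induction k generalizing a with
  | zero =>
    obtain ⟨c, ⟨i, j, hc⟩, rfl, -⟩ := h
    exact .inl ⟨i, isLeft_one_iff.2 ⟨j, hc⟩⟩
  | succ k ih =>
    obtain ⟨c, ⟨i, j, hc⟩, hcb, hu⟩ := h
    have hmono' := Rot.monotone hmono ⟨i, j, hc⟩
    have contra : ∀ i', i' ≠ i →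
        ¬ ∃ d, (∃ l, RotAt n E i' l a d) ∧ Relation.ReflTransGen (Rot n E) d b := by
      rintro i' hne ⟨d, ⟨l, hd⟩, hdb⟩
      have hdc := hu d ⟨i', l, hd⟩ hdb
      have hi := hc.2.2.1.1
      have hi' := hd.2.2.1.1
      have e1 := congrFun (hdc.symm.trans hd.2.2.2) i
      have e2 := congrFun (hdc.trans hc.2.2.2) i'
      rw [hc.2.2.2, lower_apply, lower_apply] at e1
      rw [hd.2.2.2, lower_apply, lower_apply] at e2
      split_ifs at e1 e2 <;> omega
    have exch : ∀ i' j' d, RotAt n E i' j' c d → Relation.ReflTransGen (Rot n E) d b →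
        i' ≠ i → i' = j ∧ E j - a j = E i - a i := by
      intro i' j' d hd hdb hne
      by_contra hcon
      obtain ⟨e, he, hed⟩ := hc.exchange hE hd hne hcon
      exact contra i' hne ⟨e, he, hed.trans hdb⟩
    obtain ⟨h0, hv, hB, hceq⟩ := id hc
    have right : ∀ i', i' ≠ i → IsRight n E (k + 1) i' c b →
        ∃ i, IsRight n E (k + 1 + 1) i a b := by
      intro i' hne h
      obtain ⟨j', d, hd, hdb⟩ := h.exists_rotAt hmono'
      obtain ⟨rfl, he⟩ := exch i' j' d hd hdb hne
      obtain ⟨-, -, l, hC, rfl⟩ := h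
      have h1 := hB.1
      have h2 := hC.add_le
      refine ⟨i, h0, hv, l, ⟨i', hB, hC.congr fun m hm => ?_, fun _ => he⟩, ?_⟩
      · rw [hceq, lower_apply, if_neg (by omega)]
      · funext m
        rw [hceq]
        simp only [lower_apply]
        split_ifs <;> omega
    have left : IsLeft n E (k + 1) i c b → IsLeft n E (k + 1 + 1) i a b := by
      rintro ⟨-, gv, j', gB, rfl⟩
      rw [hceq] at gB gv
      obtain rfl := hB.lower.unique gB
      have h1 := hB.1
      refine ⟨h0, ?_, j, hB, ?_⟩
      · simp only [lower_apply] at gv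
        push_cast at gv ⊢
        split_ifs at gv <;> omega
      · funext m
        rw [hceq]
        simp only [lower_apply]
        push_cast
        split_ifs <;> omega
    rcases ih hmono' hcb with ⟨i', h⟩ | ⟨i', h⟩
    · by_cases hne : i' = i
      · exact .inl ⟨i, left (hne ▸ h)⟩
      · cases k with
        | zero => exact .inr (right i' hne (isRight_one_iff.2 (isLeft_one_iff.1 h)))
        | succ k =>
          obtain ⟨j', d, hd, hdb⟩ := h.exists_rotAt
          obtain ⟨rfl, he⟩ := exch i' j' d hd hdb hne
          exact (contra i' hne (hc.exchange_isLeft h he)).elim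
    · by_cases hne : i' = i
      · cases k with
        | zero => exact .inl ⟨i, left (isLeft_one_iff.2 (isRight_one_iff.1 (hne ▸ h)))⟩
        | succ k =>
          obtain ⟨-, -, j', ⟨l, gB, gC, ge⟩, rfl⟩ := hne ▸ h
          have h2 := gC.add_le
          have h3 := gC.le_size
          rw [hceq] at gB ge
          obtain rfl := hB.lower.unique gB
          have h1 := hB.1
          have e1 := ge (by omega)
          have e2 := hB.2.2.2 (by omega)
          simp only [lower_apply] at e1
          split_ifs at e1 <;> omega
      · exact .inr (right i' hne h)

end Vectors
end AltTamari

namespace AltTamari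

/-! ### Linear intervals as unique paths -/

section Intervals

variable {S : Set (List Bool)} {R : List Bool → List Bool → Prop} {P Q : List Bool} {k : ℕ}

theorem hasChainIn_zero {le : List Bool → List Bool → Prop} :
    HasChainIn S le P Q 0 ↔ P = Q ∧ P ∈ S := by
  constructor
  · rintro ⟨c, rfl, h, hS, -⟩
    exact ⟨h, hS 0 le_rfl⟩
  · rintro ⟨rfl, h⟩
    exact ⟨fun _ => P, rfl, rfl, fun _ _ => h, fun i hi => absurd hi (Nat.not_lt_zero i)⟩

theorem hasChainIn_succ {le : List Bool → List Bool → Prop} :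
    HasChainIn S le P Q (k + 1) ↔ P ∈ S ∧ ∃ T, ltOf le P T ∧ HasChainIn S le T Q k := by
  constructor
  · rintro ⟨c, rfl, rfl, hS, hlt⟩
    exact ⟨hS 0 (by omega), c 1, hlt 0 (by omega), fun i => c (i + 1), rfl, rfl,
      fun i hi => hS _ (by omega), fun i hi => hlt _ (by omega)⟩
  · rintro ⟨hP, T, hT, c, rfl, rfl, hS, hlt⟩
    refine ⟨fun i => Nat.casesOn i P c, rfl, rfl, ?_, ?_⟩
    · rintro (_ | i) hi
      · exact hP
      · exact hS i (by omega)
    · rintro (_ | i) hi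
      · exact hT
      · exact hlt i (by omega)

theorem le_of_hasChainIn (h : HasChainIn S (Relation.ReflTransGen R) P Q k) :
    Relation.ReflTransGen R P Q := by
  induction k generalizing P with
  | zero => exact (hasChainIn_zero.1 h).1 ▸ .refl
  | succ k ih =>
    obtain ⟨-, T, hT, h⟩ := hasChainIn_succ.1 h
    exact hT.1.trans (ih h)

theorem mem_of_le (hS : ∀ P Q, P ∈ S → R P Q → Q ∈ S) (hP : P ∈ S)
    (h : Relation.ReflTransGen R P Q) : Q ∈ S := by
  induction h with
  | refl => exact hP
  | tail _ h ih => exact hS _ _ ih h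

theorem ltOf_of_ne (anti : ∀ P Q, P ∈ S → Relation.ReflTransGen R P Q →
      Relation.ReflTransGen R Q P → P = Q)
    (hP : P ∈ S) (h : Relation.ReflTransGen R P Q) (hne : P ≠ Q) :
    ltOf (Relation.ReflTransGen R) P Q :=
  ⟨h, fun h' => hne (anti P Q hP h h')⟩

theorem UniquePath.eq_or_le {T : List Bool} {c : List Bool}
    (hu : ∀ c', R P c' → Relation.ReflTransGen R c' Q → c' = c)
    (h1 : Relation.ReflTransGen R P T) (h2 : Relation.ReflTransGen R T Q) :
    T = P ∨ Relation.ReflTransGen R c T := by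
  rcases h1.cases_head with rfl | ⟨d, hd, hdT⟩
  · exact .inl rfl
  · exact .inr (hu d hd (hdT.trans h2) ▸ hdT)

theorem linearInterval_and_height_iff (hS : ∀ P Q, P ∈ S → R P Q → Q ∈ S)
    (anti : ∀ P Q, P ∈ S → Relation.ReflTransGen R P Q → Relation.ReflTransGen R Q P → P = Q)
    (irr : ∀ P Q, P ∈ S → R P Q → P ≠ Q)
    (cov : ∀ P Q Q', P ∈ S → R P Q → R P Q' → Relation.ReflTransGen R Q Q' → Q = Q') :
    LinearInterval S (Relation.ReflTransGen R) P Q ∧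
      IntervalHeight S (Relation.ReflTransGen R) P Q k ↔
    P ∈ S ∧ UniquePath R k P Q := by
  constructor
  · rintro ⟨⟨hP, hQ, hle, hlin⟩, hch, hmax⟩
    refine ⟨hP, ?_⟩
    induction k generalizing P with
    | zero =>
      by_contra hne
      have := hmax 1 (hasChainIn_succ.2 ⟨hP, Q, ltOf_of_ne anti hP hle hne,
        hasChainIn_zero.2 ⟨rfl, hQ⟩⟩)
      omega
    | succ k ih =>
      obtain ⟨-, T, hPT, hTQ⟩ := hasChainIn_succ.1 hch
      rcases hPT.1.cases_head with rfl | ⟨c, hc, hcT⟩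
      · exact (hPT.2 .refl).elim
      have hcS := hS _ _ hP hc
      have hlt := ltOf_of_ne anti hP (.single hc) (irr _ _ hP hc)
      have hcT' : c = T := by
        by_contra hne
        have := hmax (k + 2) (hasChainIn_succ.2 ⟨hP, c, hlt, hasChainIn_succ.2 ⟨hcS, T,
          ltOf_of_ne anti hcS hcT hne, hTQ⟩⟩)
        omega
      subst hcT'
      refine ⟨c, hc, ih hcS (le_of_hasChainIn hTQ) ?_ hTQ ?_, ?_⟩
      · intro T T' hT hT' h1 h2 h1' h2'
        exact hlin T T' hT hT' (.head hc h1) h2 (.head hc h1') h2'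
      · intro m hm
        have := hmax (m + 1) (hasChainIn_succ.2 ⟨hP, c, hlt, hm⟩)
        omega
      · intro c' hc' hc'Q
        rcases hlin c c' hcS (hS _ _ hP hc') (.single hc) (le_of_hasChainIn hTQ) (.single hc') hc'Q with h | h
        · exact (cov _ _ _ hP hc hc' h).symm
        · exact cov _ _ _ hP hc' hc h
  · rintro ⟨hP, h⟩
    refine ⟨⟨hP, mem_of_le hS hP h.le, h.le, ?_⟩, ?_, ?_⟩
    · intro T T' _ _ h1 h2 h1' h2'
      induction k generalizing P with
      | zero =>
        obtain rfl : P = Q := h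
        exact .inl (h2.trans h1')
      | succ k ih =>
        obtain ⟨c, hc, hcQ, hu⟩ := h
        rcases UniquePath.eq_or_le hu h1 h2 with rfl | h3
        · exact .inl h1'
        rcases UniquePath.eq_or_le hu h1' h2' with rfl | h3'
        · exact .inr (.head hc h3)
        exact ih (hS _ _ hP hc) hcQ h3 h3'
    · induction k generalizing P with
      | zero => exact hasChainIn_zero.2 ⟨h, hP⟩
      | succ k ih =>
        obtain ⟨c, hc, hcQ, -⟩ := h
        exact hasChainIn_succ.2 ⟨hP, c, ltOf_of_ne anti hP (.single hc) (irr _ _ hP hc),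
          ih (hS _ _ hP hc) hcQ⟩
    · suffices ∀ T m, Relation.ReflTransGen R P T →
          HasChainIn S (Relation.ReflTransGen R) T Q m → m ≤ k from fun m => this P m .refl
      induction k generalizing P with
      | zero =>
        rintro T (_ | m) hPT hm
        · exact le_rfl
        · obtain ⟨-, T', hT', hm⟩ := hasChainIn_succ.1 hm
          obtain rfl : P = Q := h
          exact (hT'.2 ((le_of_hasChainIn hm).trans hPT)).elim
      | succ k ih =>
        obtain ⟨c, hc, hcQ, hu⟩ := h
        have ih' := ih (hS _ _ hP hc) hcQ
        intro T m hPT hm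
        rcases UniquePath.eq_or_le hu hPT (le_of_hasChainIn hm) with rfl | hcT
        · cases m with
          | zero => omega
          | succ m =>
            obtain ⟨-, T', hT', hm⟩ := hasChainIn_succ.1 hm
            rcases UniquePath.eq_or_le hu hT'.1 (le_of_hasChainIn hm) with rfl | hcT
            · exact (hT'.2 .refl).elim
            · have := ih' T' m hcT hm
              omega
        · have := ih' T m hcT hm
          omega

end Intervals
end AltTamari

namespace AltTamari

/-! ### Words and their down-step vectors -/

section Words

variable {δ : ℕ → ℤ} {n : ℕ}

/-- The number of down steps before the up step of index `m` (indices start at `0`); the number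
of all down steps if there is no such up step. -/
def downVec : List Bool → ℕ → ℤ
  | [], _ => 0
  | false :: w, m => downVec w m + 1
  | true :: _, 0 => 0
  | true :: w, m + 1 => downVec w m

/-- The sum of the increments of the first `m` up steps. -/
def incSum (δ : ℕ → ℤ) (m : ℕ) : ℤ := ∑ l ∈ Finset.range m, δ (l + 1)

theorem incSum_succ (m : ℕ) : incSum δ (m + 1) = incSum δ m + δ (m + 1) :=
  Finset.sum_range_succ _ _

theorem incSum_monotone (hδ : IsIncFun δ) : Monotone (incSum δ) :=
  monotone_nat_of_le_succ fun m => by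
    rw [incSum_succ]
    rcases hδ (m + 1) with h | h <;> omega

/-- The word `w`, read from altitude `c` after `s` up steps, stays at positive altitude until
its end, where it has altitude `0`. -/
def FirstPassage (δ : ℕ → ℤ) : ℕ → ℤ → List Bool → Prop
  | _, c, [] => c = 0
  | s, c, true :: w => 0 < c ∧ FirstPassage δ (s + 1) (c + δ (s + 1)) w
  | s, c, false :: w => 0 < c ∧ FirstPassage δ s (c - 1) w

/-- The word `w`, read from height `g`, stays at nonnegative height. -/
def NonnegFrom : ℤ → List Bool → Prop
  | g, [] => 0 ≤ g
  | g, true :: w => 0 ≤ g ∧ NonnegFrom (g + 1) w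
  | g, false :: w => 0 ≤ g ∧ NonnegFrom (g - 1) w

theorem nonnegFrom_iff {g : ℤ} {w : List Bool} :
    NonnegFrom g w ↔ ∀ p, p <+: w → (p.count false : ℤ) ≤ g + p.count true := by
  induction w generalizing g with
  | nil => simp [NonnegFrom]
  | cons x w ih =>
    constructor
    · intro h p hp
      rcases p with _ | ⟨y, p⟩
      · cases x <;> simpa using h.1
      · obtain ⟨rfl, hp'⟩ := List.cons_prefix_cons.1 hp
        cases y
        · have := ih.1 h.2 p hp'
          simp
          omega
        · have := ih.1 h.2 p hp'
          simp
          omega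
    · intro h
      have h0 := h [] (List.nil_prefix)
      have h1 : ∀ p, p <+: w → _ := fun p hp => h (x :: p) (List.cons_prefix_cons.2 ⟨rfl, hp⟩)
      cases x
      · refine ⟨by simpa using h0, ih.2 fun p hp => ?_⟩
        have := h1 p hp
        simp at this
        omega
      · refine ⟨by simpa using h0, ih.2 fun p hp => ?_⟩
        have := h1 p hp
        simp at this
        omega

theorem nonnegFrom_append {g : ℤ} {v w : List Bool} :
    NonnegFrom g (v ++ w) ↔
      NonnegFrom g v ∧ NonnegFrom (g + v.count true - v.count false) w := by
  induction v generalizing g with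
  | nil =>
    suffices NonnegFrom g w → 0 ≤ g by simpa [NonnegFrom]
    intro h
    have := nonnegFrom_iff.1 h [] List.nil_prefix
    simpa using this
  | cons x v ih =>
    cases x
    · simp only [List.cons_append, NonnegFrom, ih, and_assoc]
      simp
      grind
    · simp only [List.cons_append, NonnegFrom, ih, and_assoc]
      simp
      grind

theorem NonnegFrom.nonneg {g : ℤ} {w : List Bool} (h : NonnegFrom g w) : 0 ≤ g := by
  simpa using nonnegFrom_iff.1 h [] List.nil_prefix

theorem isDyckWord_iff {w : List Bool} :
    IsDyckWord n w ↔ w.count true = n ∧ w.count false = n ∧ NonnegFrom 0 w := by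
  simp [IsDyckWord, nonnegFrom_iff]

theorem downVec_of_le {w : List Bool} {m : ℕ} (h : w.count true ≤ m) :
    downVec w m = w.count false := by
  induction w generalizing m with
  | nil => rfl
  | cons x w ih =>
    cases x
    · simp [downVec, ih (m := m) (by simpa using h)]
    · rcases m with _ | m
      · simp at h
      · simp only [downVec]
        rw [ih (by simpa using h)]
        simp

theorem downVec_append_of_lt {v w : List Bool} {m : ℕ} (h : m < v.count true) :
    downVec (v ++ w) m = downVec v m := by
  induction v generalizing m with
  | nil => simp at h
  | cons x v ih =>
    cases x
    · simp [downVec, ih (m := m) (by simpa using h)]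
    · rcases m with _ | m
      · rfl
      · simp only [downVec, List.cons_append]
        exact ih (by simpa using h)

theorem downVec_append_add {v w : List Bool} {m : ℕ} :
    downVec (v ++ w) (v.count true + m) = v.count false + downVec w m := by
  induction v generalizing m with
  | nil => simp
  | cons x v ih =>
    cases x
    · simp [downVec, ih]
      ring
    · have := ih (m := m)
      simp only [List.count_cons_self, List.cons_append]
      rw [show v.count true + 1 + m = (v.count true + m) + 1 by ring]
      simp only [downVec]
      rw [this]
      simp

theorem downVec_append_of_le {v w : List Bool} {m : ℕ} (h : v.count true ≤ m) :
    downVec (v ++ w) m = v.count false + downVec w (m - v.count true) := by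
  conv_lhs => rw [show m = v.count true + (m - v.count true) by omega]
  exact downVec_append_add

theorem downVec_nonneg (w : List Bool) (m : ℕ) : 0 ≤ downVec w m := by
  induction w generalizing m with
  | nil => exact le_rfl
  | cons x w ih =>
    cases x
    · have := ih m
      simp only [downVec]
      omega
    · rcases m with _ | m
      · exact le_rfl
      · exact ih m

theorem downVec_le_succ (w : List Bool) (m : ℕ) : downVec w m ≤ downVec w (m + 1) := by
  induction w generalizing m with
  | nil => exact le_rfl
  | cons x w ih =>
    cases x
    · have := ih m
      simp only [downVec]
      omega
    · rcases m with _ | m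
      · exact downVec_nonneg _ _
      · exact ih m

theorem downVec_monotone (w : List Bool) : Monotone (downVec w) :=
  monotone_nat_of_le_succ (downVec_le_succ w)

theorem NonnegFrom.downVec_le {g : ℤ} {w : List Bool} (h : NonnegFrom g w) {m : ℕ}
    (hm : m < w.count true) : downVec w m ≤ g + m := by
  induction w generalizing g m with
  | nil => simp at hm
  | cons x w ih =>
    cases x
    · have := ih h.2 (m := m) (by simpa using hm)
      simp only [downVec]
      omega
    · rcases m with _ | m
      · simpa [downVec] using h.1
      · have := ih h.2 (m := m) (by simpa using hm)
        simp only [downVec]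
        push_cast
        omega

theorem eq_of_downVec_eq {v w : List Bool} (h1 : v.count true = w.count true)
    (h : downVec v = downVec w) : v = w := by
  have h2 : v.count false = w.count false := by
    have := congrFun h (v.count true)
    rw [downVec_of_le le_rfl, downVec_of_le h1.ge] at this
    exact_mod_cast this
  induction v generalizing w with
  | nil =>
    cases w with
    | nil => rfl
    | cons x w => cases x <;> simp at h1 h2
  | cons x v ih =>
    cases w with
    | nil => cases x <;> simp at h1 h2
    | cons y w =>
      cases x <;> cases y
      · simp only [List.cons.injEq, true_and]
        refine ih (by simpa using h1) ?_ (by simpa using h2)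
        funext m
        simpa [downVec] using congrFun h m
      · have := congrFun h 0
        have := downVec_nonneg v 0
        simp only [downVec] at *
        omega
      · have := congrFun h 0
        have := downVec_nonneg w 0
        simp only [downVec] at *
        omega
      · simp only [List.cons.injEq, true_and]
        refine ih (by simpa using h1) ?_ (by simpa using h2)
        funext m
        exact congrFun h (m + 1)

/-- Splitting a word at the up step of index `i`. -/
theorem exists_split {w : List Bool} {i : ℕ} (h : i < w.count true) :
    ∃ v u, w = v ++ true :: u ∧ v.count true = i := by
  induction w generalizing i with
  | nil => simp at h
  | cons x w ih =>
    cases x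
    · obtain ⟨v, u, rfl, hv⟩ := ih (i := i) (by simpa using h)
      exact ⟨false :: v, u, rfl, by simpa using hv⟩
    · rcases i with _ | i
      · exact ⟨[], w, rfl, rfl⟩
      · obtain ⟨v, u, rfl, hv⟩ := ih (i := i) (by simpa using h)
        exact ⟨true :: v, u, rfl, by simpa using hv⟩

theorem split_unique {v u v' u' : List Bool} (h : v ++ true :: u = v' ++ true :: u')
    (hc : v.count true = v'.count true) : v = v' ∧ u = u' := by
  induction v generalizing v' with
  | nil =>
    rcases v' with _ | ⟨_ | _, v'⟩ <;> simp_all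
  | cons x v ih =>
    rcases v' with _ | ⟨y, v'⟩
    · cases x <;> simp_all
    · simp only [List.cons_append, List.cons.injEq] at h
      obtain ⟨rfl, h⟩ := h
      have := ih h (by cases x <;> simpa using hc)
      exact ⟨by rw [this.1], this.2⟩

theorem downVec_split (v u : List Bool) :
    downVec (v ++ true :: u) (v.count true) = v.count false := by
  simpa [downVec] using downVec_append_add (v := v) (w := true :: u) (m := 0)

/-- Splitting a word at an up step preceded by at least `k` down steps. -/
theorem exists_split_replicate {w : List Bool} {i k : ℕ} (hi : i < w.count true) (h0 : 0 < i)
    (h : downVec w (i - 1) + k ≤ downVec w i) :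
    ∃ v u, w = v ++ (List.replicate k false ++ true :: u) ∧ v.count true = i := by
  obtain ⟨v, u, rfl, rfl⟩ := exists_split hi
  rw [downVec_split, downVec_append_of_lt (by omega)] at h
  suffices ∀ v : List Bool, 0 < v.count true →
      downVec v (v.count true - 1) + k ≤ v.count false →
      ∃ v', v = v' ++ List.replicate k false by
    obtain ⟨v', rfl⟩ := this v h0 h
    exact ⟨v', u, by simp, by simp [List.count_replicate]⟩
  clear hi h0 h
  intro v
  induction k with
  | zero => exact fun _ _ => ⟨v, by simp⟩
  | succ k ih =>
    intro h0 h
    obtain ⟨v', rfl⟩ := ih h0 (by push_cast at h; omega)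
    rcases List.eq_nil_or_concat' v' with rfl | ⟨v', x, rfl⟩
    · simp at h0
    · cases x
      · exact ⟨v', by simp [List.replicate_succ]⟩
      · exfalso
        have e := downVec_split v' (List.replicate k false)
        have hc : List.count true (v' ++ [true] ++ List.replicate k false) - 1
            = v'.count true := by simp [List.count_replicate]
        rw [hc, show v' ++ [true] ++ List.replicate k false =
          v' ++ true :: List.replicate k false by simp, e] at h
        simp at h

theorem FirstPassage.nil_iff {s : ℕ} {c : ℤ} {w : List Bool} (h : FirstPassage δ s c w) :
    w = [] ↔ c = 0 := by
  rcases w with _ | ⟨_ | _, w⟩ <;> simp only [FirstPassage] at h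
  · simpa using h
  · simp; omega
  · simp; omega

theorem FirstPassage.unique {s : ℕ} {c : ℤ} {v v' u u' : List Bool}
    (h : FirstPassage δ s c v) (h' : FirstPassage δ s c v') (e : v ++ u = v' ++ u') :
    v = v' ∧ u = u' := by
  induction v generalizing s c v' with
  | nil =>
    obtain rfl := h'.nil_iff.2 h
    exact ⟨rfl, e⟩
  | cons x v ih =>
    rcases v' with _ | ⟨y, v'⟩
    · have := h.nil_iff.2 h'
      simp at this
    · simp only [List.cons_append, List.cons.injEq] at e
      obtain ⟨rfl, e⟩ := e
      cases x
      · have := ih h.2 h'.2 e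
        exact ⟨by rw [this.1], this.2⟩
      · have := ih h.2 h'.2 e
        exact ⟨by rw [this.1], this.2⟩

theorem exists_firstPassage (hδ : IsIncFun δ) {s : ℕ} {c : ℤ} {w : List Bool} (hc : 0 ≤ c)
    (h : c + w.count true - w.count false ≤ 0) :
    ∃ v u, w = v ++ u ∧ FirstPassage δ s c v := by
  induction w generalizing s c with
  | nil => exact ⟨[], [], rfl, by simp at h; exact le_antisymm h hc⟩
  | cons x w ih =>
    rcases hc.eq_or_lt with rfl | hc'
    · exact ⟨[], x :: w, rfl, rfl⟩
    cases x
    · obtain ⟨v, u, rfl, hv⟩ := ih (s := s) (c := c - 1) (by omega) (by simp at h ⊢; omega)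
      exact ⟨false :: v, u, rfl, hc', hv⟩
    · obtain ⟨v, u, rfl, hv⟩ := ih (s := s + 1) (c := c + δ (s + 1))
        (by rcases hδ (s + 1) with h | h <;> omega)
        (by rcases hδ (s + 1) with h' | h' <;> simp at h ⊢ <;> omega)
      exact ⟨true :: v, u, rfl, hc', hv⟩

theorem FirstPassage.altitude_end {s : ℕ} {c : ℤ} {w : List Bool} (h : FirstPassage δ s c w) :
    c + incSum δ (s + w.count true) - incSum δ s - w.count false = 0 := by
  induction w generalizing s c with
  | nil => simpa [FirstPassage] using h
  | cons x w ih =>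
    cases x
    · have := ih h.2
      simp
      omega
    · have := ih h.2
      rw [incSum_succ, show s + 1 + w.count true = s + (w.count true + 1) by ring] at this
      simp
      omega

theorem FirstPassage.altitude_pos {s : ℕ} {c : ℤ} {w : List Bool} (h : FirstPassage δ s c w)
    {m : ℕ} (hm : m < w.count true) :
    0 < c + incSum δ (s + m) - incSum δ s - downVec w m := by
  induction w generalizing s c m with
  | nil => simp at hm
  | cons x w ih =>
    cases x
    · have := ih h.2 (m := m) (by simpa using hm)
      simp only [downVec]
      omega
    · rcases m with _ | m
      · simpa [downVec] using h.1
      · have := ih h.2 (m := m) (by simpa using hm)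
        rw [incSum_succ, show s + 1 + m = s + (m + 1) by ring] at this
        simp only [downVec]
        omega

theorem FirstPassage.nonnegFrom (hδ : IsIncFun δ) {s : ℕ} {c g : ℤ} {w : List Bool}
    (h : FirstPassage δ s c w) (hg : c ≤ g) :
    NonnegFrom g w ∧ g - c ≤ g + w.count true - w.count false := by
  induction w generalizing s c g with
  | nil =>
    have : c = 0 := h
    simp [NonnegFrom]
    omega
  | cons x w ih =>
    have h0 : 0 < c := by cases x <;> exact h.1
    cases x
    · have := ih h.2 (g := g - 1) (by omega)
      refine ⟨⟨by omega, this.1⟩, ?_⟩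
      simp
      omega
    · have h1 := hδ (s + 1)
      have := ih h.2 (g := g + 1) (by omega)
      refine ⟨⟨by omega, this.1⟩, ?_⟩
      simp
      omega

end Words
end AltTamari

namespace AltTamari

/-! ### Rotations of words and rotations of vectors -/

section Bridge

variable {δ : ℕ → ℤ} {n : ℕ}

/-- The elevation of the word `w`, read after `s` up steps. -/
def wordElev (δ : ℕ → ℤ) : ℕ → List Bool → ℤ
  | _, [] => 0
  | s, true :: w => δ (s + 1) + wordElev δ (s + 1) w
  | s, false :: w => -1 + wordElev δ s w

theorem elev_append (A w : List Bool) {m : ℕ} (hm : m ≤ w.length) :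
    elev δ (A ++ w) A.length (A.length + m) = wordElev δ (A.count true) (w.take m) := by
  induction w generalizing A m with
  | nil =>
    obtain rfl : m = 0 := by simpa using hm
    simp [elev, wordElev]
  | cons x w ih =>
    rcases m with _ | m
    · simp [elev, wordElev]
    · have h1 := ih (A ++ [x]) (m := m) (by simpa using hm)
      have h2 : stepVal δ (A ++ x :: w) A.length =
          if x = true then δ ((A ++ [x]).count true) else -1 := by
        have : (A ++ x :: w).take (A.length + 1) = A ++ [x] := by
          rw [List.take_append]
          simp
        rw [stepVal, this]
        simp
      rw [elev, Finset.sum_eq_sum_Ico_succ_bot (by omega), h2]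
      have h3 : A ++ x :: w = A ++ [x] ++ w := by simp
      rw [elev, List.length_append, List.length_singleton, ← h3,
        show A.length + 1 + m = A.length + (m + 1) by ring] at h1
      rw [h1]
      cases x <;> simp [wordElev]

theorem firstPassage_iff (hδ : IsIncFun δ) {s : ℕ} {c : ℤ} {w : List Bool} (hc : 0 ≤ c) :
    FirstPassage δ s c w ↔ c + wordElev δ s w = 0 ∧
      ∀ m < w.length, c + wordElev δ s (w.take m) ≠ 0 := by
  induction w generalizing s c with
  | nil => simp [FirstPassage, wordElev]
  | cons x w ih =>
    have hx : (∀ m < (x :: w).length, c + wordElev δ s ((x :: w).take m) ≠ 0) ↔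
        c ≠ 0 ∧ ∀ m < w.length, c + wordElev δ s (x :: w.take m) ≠ 0 := by
      constructor
      · intro h
        exact ⟨by simpa [wordElev] using h 0 (by simp),
          fun m hm => h (m + 1) (by simpa using hm)⟩
      · rintro ⟨h0, h⟩ (_ | m) hm
        · simpa [wordElev] using h0
        · exact h m (by simpa using hm)
    rw [hx]
    by_cases h0 : c = 0
    · cases x <;> simp [FirstPassage, h0]
    · have hpos : 0 < c := by omega
      cases x
      · simp only [FirstPassage, wordElev]
        rw [ih (by omega)]
        grind
      · simp only [FirstPassage, wordElev]
        rw [ih (by have := hδ (s + 1); omega)]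
        grind

theorem isDeltaExcAt_iff (hδ : IsIncFun δ) (A T C : List Bool) :
    IsDeltaExcAt δ (A ++ T) A.length C ↔ ∃ W B, T = true :: (W ++ B) ∧ C = true :: W ∧
      FirstPassage δ (A.count true + 1) (δ (A.count true + 1)) W := by
  have hnn : 0 ≤ δ (A.count true + 1) := by have := hδ (A.count true + 1); omega
  constructor
  · rintro ⟨h1, m, h0, hm, rfl, h2, h3⟩
    obtain ⟨T, rfl⟩ : ∃ T', T = true :: T' := by
      rcases T with _ | ⟨_ | _, T⟩ <;> simp at h1
      simp
    obtain ⟨m, rfl⟩ : ∃ m', m = m' + 1 := ⟨m - 1, by omega⟩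
    have hm' : m ≤ T.length := by simp at hm; omega
    refine ⟨T.take m, T.drop m, by simp, by simp, (firstPassage_iff hδ hnn).2 ⟨?_, ?_⟩⟩
    · rw [elev_append _ _ (by simpa using hm')] at h2
      exact h2
    · intro m' hlt
      have hlt' : m' < m := by simp at hlt; omega
      have := h3 (m' + 1) (by omega) (by omega)
      rw [elev_append _ _ (by simp; omega)] at this
      rw [List.take_take, min_eq_left (by omega)]
      exact this
  · rintro ⟨W, B, rfl, rfl, h⟩
    obtain ⟨h1, h2⟩ := (firstPassage_iff hδ hnn).1 h
    refine ⟨by simp, W.length + 1, by omega, by simp, by simp, ?_, ?_⟩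
    · rw [elev_append _ _ (by simp)]
      simpa [wordElev] using h1
    · rintro (_ | m) h0 hm
      · omega
      · rw [elev_append _ _ (by simp; omega)]
        have := h2 m (by omega)
        rw [List.take_succ_cons, List.take_append, show m - W.length = 0 by omega]
        simpa [wordElev] using this

theorem deltaRot_iff (hδ : IsIncFun δ) {P Q : List Bool} :
    DeltaRot δ P Q ↔ ∃ A W B, P = A ++ false :: true :: (W ++ B) ∧
      Q = A ++ true :: (W ++ false :: B) ∧
      FirstPassage δ (A.count true + 1) (δ (A.count true + 1)) W := by
  have key : ∀ A T C : List Bool, IsDeltaExcAt δ (A ++ false :: T) (A.length + 1) C ↔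
      ∃ W B, T = true :: (W ++ B) ∧ C = true :: W ∧
        FirstPassage δ (A.count true + 1) (δ (A.count true + 1)) W := by
    intro A T C
    have := isDeltaExcAt_iff hδ (A ++ [false]) T C
    simpa only [List.append_assoc, List.cons_append, List.nil_append, List.length_append,
      List.length_singleton, List.count_append,
      List.count_cons_of_ne (show false ≠ true by decide), List.count_nil, add_zero] using this
  constructor
  · rintro ⟨A, C, B, rfl, rfl, h⟩
    obtain ⟨W, B', h1, rfl, h2⟩ := (key A _ _).1 h
    exact ⟨A, W, B, by simp, by simp, h2⟩
  · rintro ⟨A, W, B, rfl, rfl, h⟩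
    exact ⟨A, true :: W, B, by simp, by simp, (key A _ _).2 ⟨W, B, rfl, rfl, h⟩⟩

theorem altitude_firstPassage {A W B : List Bool}
    (h : FirstPassage δ (A.count true + 1) (δ (A.count true + 1)) W) :
    incSum δ (A.count true + 1 + W.count true) -
        downVec (A ++ true :: (W ++ B)) (A.count true + 1 + W.count true) =
      incSum δ (A.count true) - downVec (A ++ true :: (W ++ B)) (A.count true)
        - downVec B 0 := by
  have h1 := h.altitude_end
  have h2 := downVec_append_add (v := A ++ true :: W) (w := B) (m := 0)
  rw [downVec_split]
  simp only [List.append_assoc, List.cons_append, List.count_append, List.count_cons_self,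
    List.count_cons_of_ne (show true ≠ false by decide), add_zero] at h2
  rw [show A.count true + 1 + W.count true = A.count true + (W.count true + 1) by ring, h2]
  rw [show A.count true + 1 + W.count true = A.count true + (W.count true + 1) by ring,
    incSum_succ] at h1
  push_cast
  omega

theorem block_firstPassage {A W B : List Bool}
    (h : FirstPassage δ (A.count true + 1) (δ (A.count true + 1)) W)
    (hn : (A ++ true :: (W ++ B)).count true = n) :
    Block n (incSum δ) (downVec (A ++ true :: (W ++ B))) (A.count true)
      (A.count true + 1 + W.count true) := by
  refine ⟨by omega, ?_, ?_, ?_⟩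
  · simp at hn
    omega
  · intro m h1 h2
    obtain ⟨m, rfl⟩ : ∃ m', m = A.count true + (m' + 1) := ⟨m - A.count true - 1, by omega⟩
    have hm : m < W.count true := by omega
    have h3 := h.altitude_pos hm
    rw [downVec_split, downVec_append_add]
    simp only [downVec]
    rw [downVec_append_of_lt hm]
    rw [incSum_succ, show A.count true + 1 + m = A.count true + (m + 1) by ring] at h3
    omega
  · intro _
    have := altitude_firstPassage (B := B) h
    have := downVec_nonneg B 0
    omega

theorem rotAt_downVec {A W B : List Bool}
    (h : FirstPassage δ (A.count true + 1) (δ (A.count true + 1)) W)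
    (hP : IsDyckWord n (A ++ false :: true :: (W ++ B))) :
    RotAt n (incSum δ) (A.count true) (A.count true + 1 + W.count true)
      (downVec (A ++ false :: true :: (W ++ B))) (downVec (A ++ true :: (W ++ false :: B))) := by
  obtain ⟨h1, h2, h3⟩ := isDyckWord_iff.1 hP
  have h4 : 0 < A.count true := by
    have := (nonnegFrom_append.1 h3).2.2.nonneg
    omega
  refine ⟨h4, ?_, ?_, ?_⟩
  · have e1 := downVec_split (A ++ [false]) (W ++ B)
    simp only [List.append_assoc, List.cons_append, List.nil_append, List.count_append] at e1
    simp at e1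
    rw [e1, downVec_append_of_lt (by omega), ← downVec_of_le (le_refl (A.count true))]
    have := downVec_monotone A (Nat.sub_le (A.count true) 1)
    omega
  · have := block_firstPassage (n := n) (A := A ++ [false]) (W := W) (B := B) (δ := δ)
      (by simpa using h) (by simpa using h1)
    simpa using this
  · funext m
    rw [lower_apply]
    rcases lt_or_ge m (A.count true) with hm | hm
    · rw [if_neg (by omega), downVec_append_of_lt hm, downVec_append_of_lt hm]
    · obtain ⟨m, rfl⟩ : ∃ m', m = A.count true + m' := ⟨m - A.count true, by omega⟩
      rw [downVec_append_add, downVec_append_add]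
      rcases m with _ | m
      · rw [if_pos (by omega)]
        simp [downVec]
      · simp only [downVec]
        rcases lt_or_ge m (W.count true) with hm | hm
        · rw [if_pos (by omega), downVec_append_of_lt hm, downVec_append_of_lt hm]
          omega
        · rw [if_neg (by omega), downVec_append_of_le hm, downVec_append_of_le hm]
          simp only [downVec]
          omega

theorem DeltaRot.rot (hδ : IsIncFun δ) {P Q : List Bool} (hP : IsDyckWord n P)
    (h : DeltaRot δ P Q) : Rot n (incSum δ) (downVec P) (downVec Q) := by
  obtain ⟨A, W, B, rfl, rfl, hW⟩ := (deltaRot_iff hδ).1 h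
  exact ⟨_, _, rotAt_downVec hW hP⟩

theorem DeltaRot.isDyckWord (hδ : IsIncFun δ) {P Q : List Bool} (hP : IsDyckWord n P)
    (h : DeltaRot δ P Q) : IsDyckWord n Q := by
  obtain ⟨A, W, B, rfl, rfl, hW⟩ := (deltaRot_iff hδ).1 h
  obtain ⟨h1, h2, h3⟩ := isDyckWord_iff.1 hP
  refine isDyckWord_iff.2 ⟨by simpa using h1, by simp at h2 ⊢; omega, ?_⟩
  simp only [nonnegFrom_append, NonnegFrom] at h3 ⊢
  obtain ⟨h4, h5, h6, h7, h8⟩ := h3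
  obtain ⟨h9, h10⟩ := hW.nonnegFrom hδ (g := 0 + A.count true - A.count false + 1)
    (by have := hδ (A.count true + 1); omega)
  have := hδ (A.count true + 1)
  refine ⟨h4, by omega, h9, by omega, ?_⟩
  convert h8 using 1
  ring

/-- The tail of a Dyck word starting with an up step begins with an excursion. -/
theorem exists_excursion (hδ : IsIncFun δ) {A T : List Bool} (hP : IsDyckWord n (A ++ true :: T)) :
    ∃ W B, T = W ++ B ∧ FirstPassage δ (A.count true + 1) (δ (A.count true + 1)) W := by
  obtain ⟨h1, h2, h3⟩ := isDyckWord_iff.1 hP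
  have h4 := (nonnegFrom_append.1 h3).2.nonneg
  have h5 := hδ (A.count true + 1)
  simp at h1 h2
  exact exists_firstPassage hδ (by omega) (by omega)

theorem exists_deltaRot (hδ : IsIncFun δ) {P : List Bool} (hP : IsDyckWord n P) {b : ℕ → ℤ}
    (h : Rot n (incSum δ) (downVec P) b) : ∃ Q, DeltaRot δ P Q ∧ downVec Q = b := by
  obtain ⟨i, j, h⟩ := h
  obtain ⟨h0, hv, hB, -⟩ := id h
  have hi : i < P.count true := by
    have h1 := hB.1
    have h2 := hB.2.1
    have h3 := hP.1
    omega
  obtain ⟨A, T, rfl, rfl⟩ := exists_split_replicate hi h0 (k := 1) (by push_cast; omega)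
  simp only [List.replicate_one, List.cons_append, List.nil_append] at *
  obtain ⟨W, B, rfl, hW⟩ := exists_excursion hδ (A := A ++ [false]) (T := T) (by simpa using hP)
  replace hW : FirstPassage δ (A.count true + 1) (δ (A.count true + 1)) W := by simpa using hW
  refine ⟨_, (deltaRot_iff hδ).2 ⟨A, W, B, rfl, rfl, hW⟩, ?_⟩
  exact (rotAt_downVec hW hP).unique h

theorem altLE.isDyckWord (hδ : IsIncFun δ) {P Q : List Bool} (hP : IsDyckWord n P)
    (h : altLE δ P Q) : IsDyckWord n Q := by
  induction h with
  | refl => exact hP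
  | tail _ h ih => exact DeltaRot.isDyckWord hδ ih h

theorem altLE.rot_le (hδ : IsIncFun δ) {P Q : List Bool} (hP : IsDyckWord n P)
    (h : altLE δ P Q) : Relation.ReflTransGen (Rot n (incSum δ)) (downVec P) (downVec Q) := by
  induction h with
  | refl => exact .refl
  | tail h' h ih => exact ih.tail (DeltaRot.rot hδ (altLE.isDyckWord hδ hP h') h)

theorem exists_altLE (hδ : IsIncFun δ) {P : List Bool} (hP : IsDyckWord n P) {b : ℕ → ℤ}
    (h : Relation.ReflTransGen (Rot n (incSum δ)) (downVec P) b) :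
    ∃ Q, altLE δ P Q ∧ downVec Q = b := by
  induction h with
  | refl => exact ⟨P, .refl, rfl⟩
  | tail _ h ih =>
    obtain ⟨Q, hQ, rfl⟩ := ih
    obtain ⟨Q', hQ', rfl⟩ := exists_deltaRot hδ (altLE.isDyckWord hδ hP hQ) h
    exact ⟨Q', .tail hQ hQ', rfl⟩

theorem IsDyckWord.eq_of_downVec_eq {P Q : List Bool} (hP : IsDyckWord n P)
    (hQ : IsDyckWord n Q) (h : downVec P = downVec Q) : P = Q :=
  AltTamari.eq_of_downVec_eq (hP.1.trans hQ.1.symm) h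

theorem uniquePath_iff (hδ : IsIncFun δ) {P Q : List Bool} {k : ℕ} (hP : IsDyckWord n P)
    (hQ : IsDyckWord n Q) :
    UniquePath (DeltaRot δ) k P Q ↔
      UniquePath (Rot n (incSum δ)) k (downVec P) (downVec Q) := by
  induction k generalizing P with
  | zero => exact ⟨fun h => congrArg downVec h, fun h => IsDyckWord.eq_of_downVec_eq hP hQ h⟩
  | succ k ih =>
    constructor
    · rintro ⟨C, h1, h2, h3⟩
      have hC := DeltaRot.isDyckWord hδ hP h1
      refine ⟨downVec C, DeltaRot.rot hδ hP h1, (ih hC).1 h2, fun c hc hcQ => ?_⟩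
      obtain ⟨D, hD, rfl⟩ := exists_deltaRot hδ hP hc
      have hD' := DeltaRot.isDyckWord hδ hP hD
      obtain ⟨Q', hDQ, hQ'⟩ := exists_altLE hδ hD' hcQ
      obtain rfl := IsDyckWord.eq_of_downVec_eq (altLE.isDyckWord hδ hD' hDQ) hQ hQ'
      rw [h3 D hD hDQ]
    · rintro ⟨c, h1, h2, h3⟩
      obtain ⟨C, hC, rfl⟩ := exists_deltaRot hδ hP h1
      have hC' := DeltaRot.isDyckWord hδ hP hC
      refine ⟨C, hC, (ih hC').2 h2, fun D hD hDQ => ?_⟩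
      have hD' := DeltaRot.isDyckWord hδ hP hD
      exact IsDyckWord.eq_of_downVec_eq hD' hC'
        (h3 _ (DeltaRot.rot hδ hP hD) (altLE.rot_le hδ hD' hDQ))

theorem linear_height_iff (hδ : IsIncFun δ) {P Q : List Bool} {k : ℕ} :
    LinearInterval (DyckSet n) (altLE δ) P Q ∧ IntervalHeight (DyckSet n) (altLE δ) P Q k ↔
      IsDyckWord n P ∧ IsDyckWord n Q ∧
        UniquePath (Rot n (incSum δ)) k (downVec P) (downVec Q) := by
  have hS : ∀ P Q, P ∈ DyckSet n → DeltaRot δ P Q → Q ∈ DyckSet n :=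
    fun P Q hP h => DeltaRot.isDyckWord hδ hP h
  have main := linearInterval_and_height_iff (S := DyckSet n) (R := DeltaRot δ) (P := P) (Q := Q)
    (k := k) hS ?_ ?_ ?_
  · refine main.trans ⟨?_, ?_⟩
    · rintro ⟨hP, h⟩
      have hQ := mem_of_le hS hP h.le
      exact ⟨hP, hQ, (uniquePath_iff hδ hP hQ).1 h⟩
    · rintro ⟨hP, hQ, h⟩
      exact ⟨hP, (uniquePath_iff hδ hP hQ).2 h⟩
  · intro P Q hP h h'
    have hQ := altLE.isDyckWord hδ hP h
    refine IsDyckWord.eq_of_downVec_eq hP hQ (funext fun m => le_antisymm ?_ ?_)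
    · exact apply_le_of_le (altLE.rot_le hδ hQ h') m
    · exact apply_le_of_le (altLE.rot_le hδ hP h) m
  · rintro P _ hP h rfl
    exact (DeltaRot.rot hδ hP h).ne rfl
  · intro P Q Q' hP h h' hle
    have hQ := DeltaRot.isDyckWord hδ hP h
    exact IsDyckWord.eq_of_downVec_eq hQ (DeltaRot.isDyckWord hδ hP h')
      ((DeltaRot.rot hδ hP h).eq_of_le (DeltaRot.rot hδ hP h') (altLE.rot_le hδ hQ hle))

end Bridge
end AltTamari

namespace AltTamari

/-! ### Counting words -/

section Count

theorem ncard_eq_of_rel {α β : Type*} {s : Set α} {t : Set β} (ρ : α → β → Prop)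
    (h1 : ∀ a ∈ s, ∃ b ∈ t, ρ a b) (h2 : ∀ b ∈ t, ∃ a ∈ s, ρ a b)
    (h3 : ∀ a b b', ρ a b → ρ a b' → b = b') (h4 : ∀ a a' b, ρ a b → ρ a' b → a = a') :
    s.ncard = t.ncard := by
  choose f hf hρ using h1
  refine Set.ncard_congr f hf ?_ ?_
  · intro a a' ha ha' e
    exact h4 a a' (f a ha) (hρ a ha) (e ▸ hρ a' ha')
  · intro b hb
    obtain ⟨a, ha, hab⟩ := h2 b hb
    exact ⟨a, ha, h3 _ _ _ (hρ a ha) hab⟩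

theorem ncard_eq_add_cons {S : Set (List Bool)} (hfin : S.Finite) (hnil : [] ∉ S) :
    S.ncard = {w | true :: w ∈ S}.ncard + {w | false :: w ∈ S}.ncard := by
  have hS : S = List.cons true '' {w | true :: w ∈ S} ∪ List.cons false '' {w | false :: w ∈ S} := by
    ext w
    rcases w with _ | ⟨_ | _, w⟩ <;> simp [hnil]
  have hsub : ∀ x, (List.cons x '' {w | x :: w ∈ S}).Finite := fun x =>
    hfin.subset (by rintro _ ⟨w, hw, rfl⟩; exact hw)
  conv_lhs => rw [hS]
  rw [Set.ncard_union_eq ?_ (hsub _) (hsub _),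
    Set.ncard_image_of_injective _ List.cons_injective,
    Set.ncard_image_of_injective _ List.cons_injective]
  rw [Set.disjoint_left]
  rintro _ ⟨w, -, rfl⟩ ⟨v, -, h⟩
  simp at h

/-- The words with `p` up steps and `q` down steps. -/
def Words (p q : ℕ) : Set (List Bool) := {w | w.count true = p ∧ w.count false = q}

theorem finite_words (p q : ℕ) : (Words p q).Finite := by
  refine (List.finite_length_eq Bool (p + q)).subset ?_
  rintro w ⟨rfl, rfl⟩
  exact (List.count_true_add_count_false w).symm

theorem ncard_words (p q : ℕ) : (Words p q).ncard = (p + q).choose p := by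
  induction h : p + q generalizing p q with
  | zero =>
    obtain ⟨rfl, rfl⟩ : p = 0 ∧ q = 0 := by omega
    have : Words 0 0 = {[]} := by
      ext w
      rcases w with _ | ⟨_ | _, w⟩ <;> simp [Words]
    simp [this]
  | succ N ih =>
    rw [ncard_eq_add_cons (finite_words p q) (by simp [Words]; omega)]
    have h1 : {w | true :: w ∈ Words p q}.ncard = if p = 0 then 0 else N.choose (p - 1) := by
      rcases p with _ | p
      · simp [Words]
      · rw [if_neg (by omega), Nat.add_sub_cancel, ← ih p q (by omega)]
        simp [Words]
    have h2 : {w | false :: w ∈ Words p q}.ncard = if q = 0 then 0 else N.choose p := by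
      rcases q with _ | q
      · simp [Words]
      · rw [← ih p q (by omega)]
        simp [Words]
    rw [h1, h2]
    rcases p with _ | p
    · rw [if_pos rfl, if_neg (by omega)]
      simp
    · rw [if_neg (by omega), Nat.choose_succ_succ]
      rcases q with _ | q
      · simp [Nat.choose_eq_zero_of_lt (show N < p + 1 by omega)]
      · simp

theorem NonnegFrom.mono {g g' : ℤ} {w : List Bool} (h : NonnegFrom g w) (hg : g ≤ g') :
    NonnegFrom g' w := by
  rw [nonnegFrom_iff] at h ⊢
  exact fun p hp => (h p hp).trans (by omega)

/-- The words with `p` up steps and `q` down steps some prefix of which has at least `r` more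
down steps than up steps. -/
def DeepWords (r p q : ℕ) : Set (List Bool) := {w ∈ Words p q | ¬ NonnegFrom (r - 1) w}

theorem finite_deepWords (r p q : ℕ) : (DeepWords r p q).Finite :=
  (finite_words p q).subset fun _ h => h.1

/-- The reflection principle. -/
theorem ncard_deepWords {r p q : ℕ} (hq : q ≤ p + r) :
    (DeepWords r p q).ncard = (p + q).choose (p + r) := by
  induction h : p + q generalizing p q r with
  | zero =>
    obtain ⟨rfl, rfl⟩ : p = 0 ∧ q = 0 := by omega
    rcases r with _ | r
    · have : DeepWords 0 0 0 = {[]} := by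
        ext w
        rcases w with _ | ⟨_ | _, w⟩ <;> simp [DeepWords, Words, NonnegFrom]
      simp [this]
    · have : DeepWords (r + 1) 0 0 = ∅ := by
        ext w
        rcases w with _ | ⟨_ | _, w⟩ <;> simp [DeepWords, Words, NonnegFrom]
      simp [this]
  | succ N ih =>
    rcases r with _ | r
    · have : DeepWords 0 p q = Words p q := by
        refine Set.sep_eq_self_iff_mem_true.2 fun w _ hw => ?_
        have := hw.nonneg
        simp at this
      rw [this, ncard_words, h, add_zero]
    rw [ncard_eq_add_cons (finite_deepWords _ p q) (by simp [DeepWords, Words]; omega)]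
    have h1 : {w | true :: w ∈ DeepWords (r + 1) p q}.ncard = N.choose (p + (r + 1)) := by
      rcases p with _ | p
      · rw [Nat.choose_eq_zero_of_lt (by omega)]
        simp [DeepWords, Words]
      · rw [show p + 1 + (r + 1) = p + (r + 1 + 1) by ring,
          ← ih (r := r + 1 + 1) (p := p) (q := q) (by omega) (by omega)]
        simp [DeepWords, Words, NonnegFrom]
    have h2 : {w | false :: w ∈ DeepWords (r + 1) p q}.ncard = N.choose (p + r) := by
      rcases q with _ | q
      · rw [Nat.choose_eq_zero_of_lt (by omega)]
        simp [DeepWords, Words]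
      · rw [← ih (r := r) (p := p) (q := q) (by omega) (by omega)]
        simp [DeepWords, Words, NonnegFrom]
    rw [h1, h2, ← add_assoc, Nat.choose_succ_succ, add_comm]

theorem ncard_dyckSet (n : ℕ) : (DyckSet n).ncard = (2 * n).choose n / (n + 1) := by
  have h1 : DyckSet n = Words n n \ DeepWords 1 n n := by
    ext w
    simp only [DyckSet, Set.mem_ofPred_eq, isDyckWord_iff, Words, DeepWords, Set.mem_sdiff]
    simp
    tauto
  have h2 : DeepWords 1 n n ⊆ Words n n := fun _ h => h.1
  have h3 := Nat.choose_succ_right_eq (2 * n) n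
  rw [h1, Set.ncard_sdiff h2 (finite_deepWords 1 n n), ncard_words,
    ncard_deepWords (by omega), ← two_mul]
  rw [show 2 * n - n = n by omega] at h3
  symm
  refine Nat.div_eq_of_eq_mul_left (by omega) ?_
  rw [Nat.sub_mul, h3, mul_add, mul_one]
  omega

/-- The Dyck words with a marked up step preceded by at least `k` down steps. -/
def MarkedWords (n k : ℕ) : Set (List Bool × List Bool) :=
  {p | IsDyckWord n (p.1 ++ (List.replicate k false ++ true :: p.2))}

theorem mem_markedWords {n k : ℕ} {A B : List Bool} :
    (A, B) ∈ MarkedWords n k ↔ A.count true + B.count true + 1 = n ∧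
      A.count false + B.count false + k = n ∧ NonnegFrom 0 A ∧
      A.count false + k ≤ A.count true ∧
      NonnegFrom (B.count false - B.count true) B := by
  have hr : ∀ (k : ℕ) (g : ℤ), NonnegFrom g (List.replicate k false) ↔ (k : ℤ) ≤ g := by
    intro k
    induction k with
    | zero => simp [NonnegFrom]
    | succ k ih =>
      intro g
      simp only [List.replicate_succ, NonnegFrom, ih]
      push_cast
      omega
  simp only [MarkedWords, Set.mem_ofPred_eq, isDyckWord_iff, nonnegFrom_append, NonnegFrom, hr]
  simp [List.count_replicate]
  constructor
  · rintro ⟨h1, h2, h3, h4, h5⟩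
    refine ⟨by omega, by omega, h3, by omega, ?_⟩
    convert h5 using 1
    omega
  · rintro ⟨h1, h2, h3, h4, h5⟩
    refine ⟨by omega, by omega, h3, by omega, ?_⟩
    convert h5 using 1
    omega

/-- Splitting a word at the down step that first reaches the minimal height. -/
theorem exists_split_min {w : List Bool} (h : ¬ NonnegFrom 0 w) :
    ∃ B A, w = B ++ false :: A ∧ NonnegFrom 0 A ∧ NonnegFrom (B.count false - B.count true) B := by
  induction w with
  | nil => simp [NonnegFrom] at h
  | cons x w ih =>
    by_cases hw : NonnegFrom 0 w
    · cases x
      · exact ⟨[], w, rfl, hw, by simp [NonnegFrom]⟩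
      · exact absurd ⟨le_rfl, hw.mono (by omega)⟩ h
    · obtain ⟨B, A, rfl, hA, hB⟩ := ih hw
      have h0 := hB.nonneg
      refine ⟨x :: B, A, rfl, hA, ?_⟩
      cases x
      · refine ⟨?_, ?_⟩
        · simp
          omega
        · convert hB using 1
          simp
          ring
      · have : B.count false ≠ B.count true := by
          intro e
          refine h ⟨le_rfl, nonnegFrom_append.2 ⟨hB.mono (by omega), by omega, hA.mono (by omega)⟩⟩
        refine ⟨?_, ?_⟩
        · simp
          omega
        · convert hB using 1
          simp
          ring

theorem split_min_unique {A B A' B' : List Bool} (hA : NonnegFrom 0 A)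
    (hB : NonnegFrom (B.count false - B.count true) B) (hA' : NonnegFrom 0 A')
    (hB' : NonnegFrom (B'.count false - B'.count true) B')
    (e : B ++ false :: A = B' ++ false :: A') : A = A' ∧ B = B' := by
  have key : ∀ {A B A' B' C : List Bool}, NonnegFrom 0 A →
      NonnegFrom (B'.count false - B'.count true) B' → B' = B ++ C →
      false :: A = C ++ false :: A' → A = A' ∧ B = B' := by
    rintro A B A' _ C hA hB rfl hC
    rcases C with _ | ⟨x, C⟩
    · simpa using hC
    · simp only [List.cons_append, List.cons.injEq] at hC
      obtain ⟨rfl, rfl⟩ := hC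
      have h1 := (nonnegFrom_append.1 hA).2.2.nonneg
      have h2 := (nonnegFrom_append.1 hB).2.2.nonneg
      simp at h1 h2
      omega
  rcases List.append_eq_append_iff.1 e with ⟨C, h1, h2⟩ | ⟨C, h1, h2⟩
  · exact key hA hB' h1 h2
  · exact (key hA' hB h1 h2).imp Eq.symm Eq.symm

theorem ncard_markedWords {n k : ℕ} (hk : 0 < k) (hkn : k ≤ n) :
    (MarkedWords n k).ncard = (2 * n - k).choose (n + 1) := by
  have h := ncard_deepWords (r := 2) (p := n - 1) (q := n - k + 1) (by omega)
  rw [show n - 1 + (n - k + 1) = 2 * n - k by omega, show n - 1 + 2 = n + 1 by omega] at h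
  rw [← h]
  refine Set.ncard_congr (fun p _ => p.2 ++ false :: p.1) ?_ ?_ ?_
  · rintro ⟨A, B⟩ hAB
    obtain ⟨h1, h2, h3, h4, h5⟩ := mem_markedWords.1 hAB
    refine ⟨⟨by simp; omega, by simp; omega⟩, fun hn => ?_⟩
    have := (nonnegFrom_append.1 hn).2.2.nonneg
    simp at this
    omega
  · rintro ⟨A, B⟩ ⟨A', B'⟩ hAB hAB' e
    obtain ⟨-, -, h3, -, h5⟩ := mem_markedWords.1 hAB
    obtain ⟨-, -, h3', -, h5'⟩ := mem_markedWords.1 hAB'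
    obtain ⟨rfl, rfl⟩ := split_min_unique h3 h5 h3' h5' e
    rfl
  · rintro w ⟨⟨h1, h2⟩, h3⟩
    obtain ⟨B, A, rfl, hA, hB⟩ := exists_split_min (w := w) fun h => h3 (h.mono (by simp))
    have h0 := hB.nonneg
    have hpos : B.count false ≠ B.count true := by
      intro e
      refine h3 (nonnegFrom_append.2 ⟨hB.mono (by push_cast; omega), ?_, hA.mono ?_⟩)
      · push_cast; omega
      · push_cast; omega
    simp at h1 h2
    exact ⟨(A, B), mem_markedWords.2 ⟨by omega, by omega, hA, by omega, hB⟩, rfl⟩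

end Count
end AltTamari

namespace AltTamari

/-! ### Counting linear intervals -/

section Intervals

variable {δ : ℕ → ℤ} {n k : ℕ}

/-- The pairs of Dyck words for which the second arises by moving an excursion of the first
before `k` down steps. -/
def LeftPairs (δ : ℕ → ℤ) (n k : ℕ) : Set (List Bool × List Bool) :=
  {p | IsDyckWord n p.1 ∧ IsDyckWord n p.2 ∧
    ∃ i, IsLeft n (incSum δ) k i (downVec p.1) (downVec p.2)}

/-- The pairs of Dyck words for which the second arises by moving `k` consecutive excursions
of the first before a down step. -/
def RightPairs (δ : ℕ → ℤ) (n k : ℕ) : Set (List Bool × List Bool) :=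
  {p | IsDyckWord n p.1 ∧ IsDyckWord n p.2 ∧
    ∃ i, IsRight n (incSum δ) k i (downVec p.1) (downVec p.2)}

theorem first_difference_unique {a b : ℕ → ℤ} {i i' : ℕ} (h : b i < a i) (h' : b i' < a i')
    (he : ∀ m < i, b m = a m) (he' : ∀ m < i', b m = a m) : i = i' := by
  rcases lt_trichotomy i i' with hl | hl | hl
  · have := he' i hl
    omega
  · exact hl
  · have := he i' hl
    omega

theorem downVec_append_pred_le {A w : List Bool} (hA : 0 < A.count true) :
    downVec (A ++ w) (A.count true - 1) ≤ A.count false := by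
  rw [downVec_append_of_lt (by omega), ← downVec_of_le (le_refl (A.count true))]
  exact downVec_monotone A (Nat.sub_le _ _)

theorem exists_isDyckWord_of_uniquePath (hδ : IsIncFun δ) {P : List Bool} (hP : IsDyckWord n P)
    {b : ℕ → ℤ} (h : UniquePath (Rot n (incSum δ)) k (downVec P) b) :
    ∃ Q, IsDyckWord n Q ∧ downVec Q = b := by
  obtain ⟨Q, hQ, hb⟩ := exists_altLE hδ hP h.le
  exact ⟨Q, altLE.isDyckWord hδ hP hQ, hb⟩

theorem ncard_leftPairs (hδ : IsIncFun δ) (hk : 0 < k) :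
    (LeftPairs δ n k).ncard = (MarkedWords n k).ncard := by
  symm
  refine ncard_eq_of_rel (fun p q => q.1 = p.1 ++ (List.replicate k false ++ true :: p.2) ∧
    IsDyckWord n q.2 ∧ IsLeft n (incSum δ) k (p.1.count true) (downVec q.1) (downVec q.2))
    ?_ ?_ ?_ ?_
  · rintro ⟨A, B⟩ hAB
    obtain ⟨h1, -, -, h4, -⟩ := mem_markedWords.1 hAB
    obtain ⟨j, hj⟩ := exists_block (n := n) (i := A.count true) (incSum δ)
      (downVec (A ++ (List.replicate k false ++ true :: B))) (by omega)
    obtain ⟨b, hleft⟩ : ∃ b, IsLeft n (incSum δ) k (A.count true)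
        (downVec (A ++ (List.replicate k false ++ true :: B))) b := by
      refine ⟨_, by omega, ?_, j, hj, rfl⟩
      have e1 := downVec_split (A ++ List.replicate k false) B
      have e2 := downVec_append_pred_le (A := A) (w := List.replicate k false ++ true :: B)
        (by omega)
      simp [List.count_replicate] at e1
      omega
    obtain ⟨Q, hQ, hb⟩ := exists_isDyckWord_of_uniquePath hδ hAB hleft.uniquePath
    rw [← hb] at hleft
    exact ⟨(_, Q), ⟨hAB, hQ, _, hleft⟩, rfl, hQ, hleft⟩
  · rintro ⟨P, Q⟩ ⟨hP, hQ, i, h⟩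
    obtain ⟨h0, hv, j, hB, -⟩ := id h
    have h1 := hB.1
    have h2 := hB.2.1
    obtain ⟨A, B, hAB, rfl⟩ := exists_split_replicate (w := P) (by rw [hP.1]; omega) h0 hv
    refine ⟨(A, B), ?_, hAB, hQ, h⟩
    change IsDyckWord n (A ++ (List.replicate k false ++ true :: B))
    exact hAB ▸ hP
  · rintro ⟨A, B⟩ ⟨P, Q⟩ ⟨P', Q'⟩ ⟨rfl, hQ, h⟩ ⟨rfl, hQ', h'⟩
    exact Prod.ext rfl (IsDyckWord.eq_of_downVec_eq hQ hQ' (h.unique h'))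
  · rintro ⟨A, B⟩ ⟨A', B'⟩ ⟨P, Q⟩ ⟨rfl, -, h⟩ ⟨e, -, h'⟩
    have hi : A.count true = A'.count true := first_difference_unique (h.apply_lt hk)
      (h'.apply_lt hk) (fun _ => h.apply_eq) (fun _ => h'.apply_eq)
    simp only [← List.append_assoc] at e
    obtain ⟨e1, rfl⟩ := split_unique e (by simp [hi])
    rw [List.append_left_inj] at e1
    simp [e1]

/-- `X` is obtained from `T` by deleting the initial up steps of `k` consecutive excursions at
its beginning. -/
def Strip (δ : ℕ → ℤ) : ℕ → ℕ → List Bool → List Bool → Prop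
  | 0, _, T, X => T = X
  | k + 1, s, T, X => ∃ W T' X', T = true :: (W ++ T') ∧ X = W ++ X' ∧
      FirstPassage δ (s + 1) (δ (s + 1)) W ∧ Strip δ k (s + 1 + W.count true) T' X'

theorem Strip.unique_right {s : ℕ} {T X X' : List Bool} (h : Strip δ k s T X)
    (h' : Strip δ k s T X') : X = X' := by
  induction k generalizing s T X X' with
  | zero => exact Eq.trans (Eq.symm h) h'
  | succ k ih =>
    obtain ⟨W, T, X, rfl, rfl, hW, h⟩ := h
    obtain ⟨W', T', X', e, rfl, hW', h'⟩ := h'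
    obtain ⟨rfl, rfl⟩ := hW.unique hW' (List.cons.inj e).2
    rw [ih h h']

theorem Strip.unique_left {s : ℕ} {T T' X : List Bool} (h : Strip δ k s T X)
    (h' : Strip δ k s T' X) : T = T' := by
  induction k generalizing s T T' X with
  | zero => exact Eq.trans h (Eq.symm h')
  | succ k ih =>
    obtain ⟨W, T, X, rfl, rfl, hW, h⟩ := h
    obtain ⟨W', T', X', rfl, e, hW', h'⟩ := h'
    obtain ⟨rfl, rfl⟩ := hW.unique hW' e
    rw [ih h h']

theorem Strip.count_true {s : ℕ} {T X : List Bool} (h : Strip δ k s T X) :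
    T.count true = k + X.count true := by
  induction k generalizing s T X with
  | zero => simp [show T = X from h]
  | succ k ih =>
    obtain ⟨W, T, X, rfl, rfl, -, h⟩ := h
    simp [ih h]
    omega

theorem Strip.count_false {s : ℕ} {T X : List Bool} (h : Strip δ k s T X) :
    T.count false = X.count false := by
  induction k generalizing s T X with
  | zero => simp [show T = X from h]
  | succ k ih =>
    obtain ⟨W, T, X, rfl, rfl, -, h⟩ := h
    simp [ih h]

theorem exists_strip (hδ : IsIncFun δ) {s : ℕ} {X : List Bool}
    (hX : X.count true + k ≤ X.count false) : ∃ T, Strip δ k s T X := by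
  induction k generalizing s X with
  | zero => exact ⟨X, rfl⟩
  | succ k ih =>
    have hs := hδ (s + 1)
    obtain ⟨W, X, rfl, hW⟩ := exists_firstPassage (s := s + 1) hδ
      (show 0 ≤ δ (s + 1) by omega) (w := X) (by omega)
    have hW' := (hW.nonnegFrom hδ le_rfl).2
    simp at hX
    obtain ⟨T, hT⟩ := ih (s := s + 1 + W.count true) (X := X) (by omega)
    exact ⟨_, W, T, X, rfl, rfl, hW, hT⟩

theorem Strip.nonnegFrom_iff (hδ : IsIncFun δ) {s : ℕ} {T X : List Bool} (h : Strip δ k s T X)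
    {g : ℤ} (hg : 0 ≤ g) : NonnegFrom g T ↔ NonnegFrom (g + k) X := by
  induction k generalizing s T X g with
  | zero => simp [show T = X from h]
  | succ k ih =>
    obtain ⟨W, T, X, rfl, rfl, hW, h⟩ := h
    have hs := hδ (s + 1)
    obtain ⟨h1, h2⟩ := hW.nonnegFrom hδ (show δ (s + 1) ≤ g + 1 by omega)
    rw [nonnegFrom_append, NonnegFrom, nonnegFrom_append, ih h (by omega)]
    simp only [hg, h1, h1.mono (show g + 1 ≤ g + (k + 1 : ℕ) by push_cast; omega), true_and]
    rw [show g + 1 + W.count true - W.count false + k =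
      g + (k + 1 : ℕ) + W.count true - W.count false by push_cast; ring]

theorem nonnegFrom_replicate_true {g : ℤ} (hg : 0 ≤ g) {X : List Bool} :
    NonnegFrom g (List.replicate k true ++ X) ↔ NonnegFrom (g + k) X := by
  induction k generalizing g with
  | zero => simp
  | succ k ih =>
    rw [List.replicate_succ, List.cons_append, NonnegFrom, ih (by omega)]
    rw [show g + 1 + k = g + (k + 1 : ℕ) by push_cast; ring]
    simp [hg]

theorem Strip.isDyckWord_iff (hδ : IsIncFun δ) {s : ℕ} {A T X : List Bool}
    (h : Strip δ k s T X) :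
    IsDyckWord n (A ++ T) ↔ IsDyckWord n (A ++ (List.replicate k true ++ X)) := by
  rw [AltTamari.isDyckWord_iff, AltTamari.isDyckWord_iff]
  have hA : NonnegFrom 0 A → 0 ≤ 0 + (A.count true : ℤ) - A.count false := by
    intro hA
    rw [← List.append_nil A] at hA
    exact (nonnegFrom_append.1 hA).2
  have : NonnegFrom 0 (A ++ T) ↔ NonnegFrom 0 (A ++ (List.replicate k true ++ X)) := by
    rw [nonnegFrom_append, nonnegFrom_append]
    refine and_congr_right fun h0 => ?_
    rw [h.nonnegFrom_iff hδ (hA h0), nonnegFrom_replicate_true (hA h0)]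
  rw [this]
  simp [h.count_true, h.count_false, List.count_replicate]

theorem Strip.exists_cons {s : ℕ} {T X : List Bool} (h : Strip δ k s T X) (hk : 0 < k) :
    ∃ T', T = true :: T' := by
  obtain ⟨k, rfl⟩ : ∃ k', k = k' + 1 := ⟨k - 1, by omega⟩
  obtain ⟨W, T', -, rfl, -⟩ := h
  exact ⟨_, rfl⟩

theorem Strip.exists_chain {A T X : List Bool} (h : Strip δ k (A.count true) T X)
    (hn : (A ++ T).count true = n) :
    ∃ j, Chain n (incSum δ) (downVec (A ++ T)) k (A.count true) j := by
  induction k generalizing A T X with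
  | zero => exact ⟨_, rfl⟩
  | succ k ih =>
    obtain ⟨W, T, X, rfl, rfl, hW, h⟩ := h
    have hc : (A ++ true :: W).count true = A.count true + 1 + W.count true := by
      simp
      ring
    have hP : A ++ true :: (W ++ T) = A ++ true :: W ++ T := by simp
    obtain ⟨j, hj⟩ := ih (A := A ++ true :: W) (hc ▸ h) (hP ▸ hn)
    rw [hc, ← hP] at hj
    refine ⟨j, _, block_firstPassage hW hn, hj, fun hk => ?_⟩
    obtain ⟨T', rfl⟩ := h.exists_cons hk
    rw [altitude_firstPassage hW]
    simp [downVec]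

theorem Chain.exists_strip (hδ : IsIncFun δ) {A T : List Bool} {j : ℕ}
    (h : Chain n (incSum δ) (downVec (A ++ T)) k (A.count true) j)
    (hP : IsDyckWord n (A ++ T)) (hT : 0 < k → downVec T 0 = 0) :
    ∃ X, Strip δ k (A.count true) T X := by
  induction k generalizing A T with
  | zero => exact ⟨T, rfl⟩
  | succ k ih =>
    obtain ⟨l, hB, hC, he⟩ := h
    obtain ⟨T, rfl⟩ : ∃ T', T = true :: T' := by
      rcases T with _ | ⟨_ | _, T⟩
      · have h1 := hP.1
        have h2 := hB.1
        have h3 := hB.2.1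
        simp at h1
        omega
      · have h1 := hT (by omega)
        have h2 := downVec_nonneg T 0
        simp only [downVec] at h1
        omega
      · exact ⟨T, rfl⟩
    obtain ⟨W, T, rfl, hW⟩ := exists_excursion hδ hP
    obtain rfl := hB.unique (block_firstPassage hW hP.1)
    have hc : (A ++ true :: W).count true = A.count true + 1 + W.count true := by
      simp
      ring
    have hP' : A ++ true :: (W ++ T) = A ++ true :: W ++ T := by simp
    obtain ⟨X, hX⟩ := ih (A := A ++ true :: W) (T := T) (by rwa [hc, ← hP']) (hP' ▸ hP) (by
      intro hk
      have := he hk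
      rw [altitude_firstPassage hW] at this
      omega)
    exact ⟨W ++ X, W, T, X, rfl, rfl, hW, hc ▸ hX⟩

/-- The Dyck words with a marked down step followed by at least `k` up steps. -/
def MirrorMarkedWords (n k : ℕ) : Set (List Bool × List Bool) :=
  {p | IsDyckWord n (p.1 ++ false :: (List.replicate k true ++ p.2))}

theorem ncard_rightPairs (hδ : IsIncFun δ) (hk : 0 < k) :
    (RightPairs δ n k).ncard = (MirrorMarkedWords n k).ncard := by
  symm
  have hcount : ∀ A : List Bool, (A ++ [false]).count true = A.count true := by simp
  have happ : ∀ A T : List Bool, A ++ false :: T = A ++ [false] ++ T := by simp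
  refine ncard_eq_of_rel (fun p q => ∃ T, q.1 = p.1 ++ false :: T ∧
    Strip δ k (p.1.count true) T p.2 ∧ IsDyckWord n q.2 ∧
    IsRight n (incSum δ) k (p.1.count true) (downVec q.1) (downVec q.2)) ?_ ?_ ?_ ?_
  · rintro ⟨A, X⟩ hAX
    change IsDyckWord n (A ++ false :: (List.replicate k true ++ X)) at hAX
    obtain ⟨h1, h2, h3⟩ := isDyckWord_iff.1 hAX
    have h4 := (nonnegFrom_append.1 h3).2.2.nonneg
    simp [List.count_replicate] at h1 h2
    obtain ⟨T, hT⟩ := exists_strip hδ (k := k) (s := A.count true) (X := X) (by omega)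
    have hP : IsDyckWord n (A ++ false :: T) := by
      rw [happ, hT.isDyckWord_iff hδ]
      simpa using hAX
    obtain ⟨j, hj⟩ := Strip.exists_chain (n := n) (A := A ++ [false]) ((hcount A).symm ▸ hT)
      (happ A T ▸ hP.1)
    rw [hcount, ← happ] at hj
    obtain ⟨b, hright⟩ :
        ∃ b, IsRight n (incSum δ) k (A.count true) (downVec (A ++ false :: T)) b := by
      refine ⟨_, by omega, ?_, j, hj, rfl⟩
      obtain ⟨T, rfl⟩ := hT.exists_cons hk
      have e1 := downVec_split (A ++ [false]) T
      have e2 := downVec_append_pred_le (A := A) (w := false :: true :: T) (by omega)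
      simp at e1
      omega
    obtain ⟨Q, hQ, hb⟩ := exists_isDyckWord_of_uniquePath hδ hP
      (hright.uniquePath fun m _ => downVec_le_succ _ m)
    rw [← hb] at hright
    exact ⟨(_, Q), ⟨hP, hQ, _, hright⟩, T, rfl, hT, hQ, hright⟩
  · rintro ⟨P, Q⟩ ⟨hP, hQ, i, h⟩
    obtain ⟨h0, hv, j, hC, -⟩ := id h
    have h1 := hC.add_le
    have h2 : j ≤ n := by
      obtain ⟨k, rfl⟩ : ∃ k', k = k' + 1 := ⟨k - 1, by omega⟩
      exact hC.le_size
    obtain ⟨A, B, hAB, rfl⟩ := exists_split_replicate (w := P) (k := 1) (by rw [hP.1]; omega) h0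
      (by dsimp only at hv; push_cast; omega)
    dsimp only at hAB hP hQ
    obtain rfl : P = A ++ false :: true :: B := by simpa using hAB
    obtain ⟨X, hX⟩ := Chain.exists_strip hδ (A := A ++ [false]) (T := true :: B)
      (by rw [hcount, ← happ]; exact hC) (happ _ _ ▸ hP) (by simp [downVec])
    refine ⟨(A, X), ?_, true :: B, rfl, hcount A ▸ hX, hQ, h⟩
    have := (hX.isDyckWord_iff hδ).1 (happ _ _ ▸ hP)
    change IsDyckWord n (A ++ false :: (List.replicate k true ++ X))
    rwa [happ]
  · rintro ⟨A, X⟩ ⟨P, Q⟩ ⟨P', Q'⟩ ⟨T, rfl, hT, hQ, h⟩ ⟨T', rfl, hT', hQ', h'⟩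
    obtain rfl := hT.unique_left hT'
    exact Prod.ext rfl (IsDyckWord.eq_of_downVec_eq hQ hQ' (h.unique h'))
  · rintro ⟨A, X⟩ ⟨A', X'⟩ ⟨P, Q⟩ ⟨T, rfl, hT, -, h⟩ ⟨T', e, hT', -, h'⟩
    have hi : A.count true = A'.count true := first_difference_unique (h.apply_lt hk)
      (h'.apply_lt hk) (fun _ => h.apply_eq) (fun _ => h'.apply_eq)
    obtain ⟨S, rfl⟩ := hT.exists_cons hk
    obtain ⟨S', rfl⟩ := hT'.exists_cons hk
    dsimp only at e hT hT'
    rw [happ A, happ A'] at e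
    obtain ⟨e1, rfl⟩ := split_unique e (by simp [hi])
    rw [List.append_left_inj] at e1
    subst e1
    rw [hT.unique_right hT']

/-- The mirror image of a word. -/
def mirror (w : List Bool) : List Bool := (w.map not).reverse

theorem mirror_mirror (w : List Bool) : mirror (mirror w) = w := by
  simp [mirror, Function.comp_def]

theorem count_mirror (w : List Bool) (x : Bool) : (mirror w).count x = w.count (!x) := by
  rw [mirror, List.count_reverse]
  induction w with
  | nil => simp
  | cons y w ih => cases x <;> cases y <;> simp_all

theorem isDyckWord_mirror {w : List Bool} (h : IsDyckWord n w) : IsDyckWord n (mirror w) := by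
  obtain ⟨h1, h2, h3⟩ := h
  refine ⟨by rw [count_mirror]; exact h2, by rw [count_mirror]; exact h1, ?_⟩
  rintro p ⟨q, hq⟩
  have hw : w = mirror q ++ mirror p := by
    rw [← mirror_mirror w, ← hq]
    simp [mirror]
  have h4 := h3 (mirror q) ⟨mirror p, hw.symm⟩
  rw [hw] at h1 h2
  simp only [List.count_append, count_mirror] at h1 h2 h4
  simp only [Bool.not_true, Bool.not_false] at h1 h2 h4
  omega

theorem ncard_mirrorMarkedWords : (MirrorMarkedWords n k).ncard = (MarkedWords n k).ncard := by
  have h1 : ∀ A B : List Bool, mirror (A ++ (List.replicate k false ++ true :: B)) =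
      mirror B ++ false :: (List.replicate k true ++ mirror A) := by
    simp [mirror]
  have h2 : ∀ A B : List Bool, mirror (A ++ false :: (List.replicate k true ++ B)) =
      mirror B ++ (List.replicate k false ++ true :: mirror A) := by
    simp [mirror]
  refine Set.ncard_congr (fun p _ => (mirror p.2, mirror p.1)) ?_ ?_ ?_
  · rintro ⟨A, B⟩ h
    have := isDyckWord_mirror h
    rw [h2] at this
    exact this
  · rintro ⟨A, B⟩ ⟨A', B'⟩ - - e
    obtain ⟨e1, e2⟩ := Prod.mk.inj e
    have e1 := congrArg mirror e1
    have e2 := congrArg mirror e2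
    simp only [mirror_mirror] at e1 e2
    rw [e1, e2]
  · rintro ⟨A, B⟩ h
    have := isDyckWord_mirror h
    rw [h1] at this
    exact ⟨(mirror B, mirror A), this, by simp [mirror_mirror]⟩

theorem finite_pairs (n : ℕ) {S : Set (List Bool × List Bool)}
    (hS : ∀ p ∈ S, IsDyckWord n p.1 ∧ IsDyckWord n p.2) : S.Finite := by
  refine ((finite_words n n).prod (finite_words n n)).subset fun p hp => ?_
  obtain ⟨h1, h2⟩ := hS p hp
  exact ⟨⟨h1.1, h1.2.1⟩, h2.1, h2.2.1⟩

theorem disjoint_leftPairs_rightPairs (hk : 2 ≤ k) :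
    Disjoint (LeftPairs δ n k) (RightPairs δ n k) := by
  rw [Set.disjoint_left]
  rintro ⟨P, Q⟩ ⟨-, -, i, h⟩ ⟨-, -, i', h'⟩
  obtain rfl := first_difference_unique (h.apply_lt (by omega)) (h'.apply_lt (by omega))
    (fun _ => h.apply_eq) (fun _ => h'.apply_eq)
  obtain ⟨-, -, j, hB, e⟩ := h
  obtain ⟨-, -, j', hC, e'⟩ := h'
  have h1 := hB.1
  have h2 := hC.add_le
  have := congrFun (e.symm.trans e') i
  simp only [lower_apply] at this
  rw [if_pos (by omega), if_pos (by omega)] at this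
  omega

theorem setOf_linear_height_succ (hδ : IsIncFun δ) :
    {p : List Bool × List Bool | LinearInterval (DyckSet n) (altLE δ) p.1 p.2 ∧
      IntervalHeight (DyckSet n) (altLE δ) p.1 p.2 (k + 1)} =
      LeftPairs δ n (k + 1) ∪ RightPairs δ n (k + 1) := by
  ext ⟨P, Q⟩
  simp only [Set.mem_ofPred_eq, linear_height_iff hδ, Set.mem_union, LeftPairs, RightPairs]
  constructor
  · rintro ⟨hP, hQ, h⟩
    refine (h.isLeft_or_isRight (incSum_monotone hδ) fun m _ => downVec_le_succ _ m).imp ?_ ?_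
    · exact fun h => ⟨hP, hQ, h⟩
    · exact fun h => ⟨hP, hQ, h⟩
  · rintro (⟨hP, hQ, i, h⟩ | ⟨hP, hQ, i, h⟩)
    · exact ⟨hP, hQ, h.uniquePath⟩
    · exact ⟨hP, hQ, h.uniquePath fun m _ => downVec_le_succ _ m⟩

theorem rightPairs_one : RightPairs δ n 1 = LeftPairs δ n 1 := by
  simp only [RightPairs, LeftPairs, isLeft_one_iff, isRight_one_iff]

theorem not_mem_leftPairs {p : List Bool × List Bool} (hk : n ≤ k) : p ∉ LeftPairs δ n k := by
  rintro ⟨hP, -, i, h0, hv, j, hB, -⟩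
  have h1 := hB.1
  have h2 := hB.2.1
  have h3 := (isDyckWord_iff.1 hP).2.2.downVec_le (m := i) (by rw [hP.1]; omega)
  have h4 := downVec_nonneg p.1 (i - 1)
  omega

theorem not_mem_rightPairs {p : List Bool × List Bool} (hk : n ≤ k + 1) :
    p ∉ RightPairs δ n (k + 1) := by
  rintro ⟨-, -, i, h0, -, j, hC, -⟩
  have h1 := hC.add_le
  have h2 := hC.le_size
  omega

end Intervals
end AltTamari

/-- counts of linear intervals of each height in the alt-Tamari poset
`Tam^δ_n`.  (Note: `binom (2n-1) (n-2)` is written in the symmetric form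
`binom (2n-1) (n+1)` to avoid the truncation of natural subtraction at `n = 1`.) -/
theorem stmt0 (n : ℕ) (hn : 1 ≤ n) (δ : ℕ → ℤ) (hδ : IsIncFun δ) :
    {pq : List Bool × List Bool |
        LinearInterval (DyckSet n) (altLE δ) pq.1 pq.2 ∧
          IntervalHeight (DyckSet n) (altLE δ) pq.1 pq.2 (0)}.ncard = (2 * n).choose n / (n + 1) ∧
    {pq : List Bool × List Bool |
        LinearInterval (DyckSet n) (altLE δ) pq.1 pq.2 ∧
          IntervalHeight (DyckSet n) (altLE δ) pq.1 pq.2 (1)}.ncard = (2 * n - 1).choose (n + 1) ∧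
    (∀ k, 2 ≤ k → k < n →
      {pq : List Bool × List Bool |
        LinearInterval (DyckSet n) (altLE δ) pq.1 pq.2 ∧
          IntervalHeight (DyckSet n) (altLE δ) pq.1 pq.2 (k)}.ncard = 2 * (2 * n - k).choose (n - k - 1)) ∧
    (∀ k, n ≤ k → ∀ P Q : List Bool,
      ¬ (LinearInterval (DyckSet n) (altLE δ) P Q ∧
          IntervalHeight (DyckSet n) (altLE δ) P Q k)) := by
  refine ⟨?_, ?_, fun k h2 hk => ?_, fun k hk P Q h => ?_⟩
  · rw [← AltTamari.ncard_dyckSet]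
    refine AltTamari.ncard_eq_of_rel (fun p w => p = (w, w)) ?_ ?_ ?_ ?_
    · rintro ⟨P, Q⟩ h
      obtain ⟨hP, hQ, h⟩ := (AltTamari.linear_height_iff hδ).1 h
      obtain rfl : P = Q := AltTamari.IsDyckWord.eq_of_downVec_eq hP hQ h
      exact ⟨P, hP, rfl⟩
    · intro P hP
      exact ⟨(P, P), (AltTamari.linear_height_iff hδ).2 ⟨hP, hP, rfl⟩, rfl⟩
    · rintro p w w' rfl h
      exact (Prod.mk.inj h).1
    · rintro p p' w rfl rfl
      rfl
  · rw [AltTamari.setOf_linear_height_succ hδ, zero_add, AltTamari.rightPairs_one,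
      Set.union_self, AltTamari.ncard_leftPairs hδ one_pos,
      AltTamari.ncard_markedWords one_pos hn]
  · obtain ⟨k, rfl⟩ : ∃ k', k = k' + 1 := ⟨k - 1, by omega⟩
    rw [AltTamari.setOf_linear_height_succ hδ,
      Set.ncard_union_eq (AltTamari.disjoint_leftPairs_rightPairs h2)
        (AltTamari.finite_pairs n fun p hp => ⟨hp.1, hp.2.1⟩)
        (AltTamari.finite_pairs n fun p hp => ⟨hp.1, hp.2.1⟩),
      AltTamari.ncard_leftPairs hδ (by omega), AltTamari.ncard_rightPairs hδ (by omega),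
      AltTamari.ncard_mirrorMarkedWords, AltTamari.ncard_markedWords (by omega) (by omega),
      ← two_mul]
    congr 1
    exact Nat.choose_symm_of_eq_add (by omega)
  · obtain ⟨k, rfl⟩ : ∃ k', k = k' + 1 := ⟨k - 1, by omega⟩
    have h' : (P, Q) ∈ AltTamari.LeftPairs δ n (k + 1) ∪ AltTamari.RightPairs δ n (k + 1) := by
      rw [← AltTamari.setOf_linear_height_succ hδ]
      exact h
    rcases h' with h' | h'
    · exact AltTamari.not_mem_leftPairs hk h'
    · exact AltTamari.not_mem_rightPairs hk h'
end

section
/- Let n ≥ 1, k ≥ 2, and let δ be an increment function of size n. The right intervals of height k in the alt-Tamari poset Tam^δ_n are in bijection with sequences (P_0, P_1, …, P_k) of Dyck words, where P_0 is marked at one of its down steps and the sizes of P_0, …, P_k add up to n − k; in particular, the number of right intervals of height k in Tam^δ_n is binomial(2n−k, n+1), independently of δ. -/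
/-- The number of words made of `s` successive first passages from some level to the one
below it, with `m` up steps in total. -/
def ballot : ℕ → ℕ → ℕ
  | 0, 0 => 1
  | 0, _ + 1 => 0
  | s + 1, 0 => ballot s 0
  | s + 1, m + 1 => ballot (s + 2) m + ballot s (m + 1)
termination_by s m => (m, s)

@[simp] lemma ballot_zero_right (s : ℕ) : ballot s 0 = 1 := by
  induction s with
  | zero => simp [ballot]
  | succ s ih => rw [ballot, ih]

@[simp] lemma ballot_zero_succ (m : ℕ) : ballot 0 (m + 1) = 0 := by
  rw [ballot]

lemma ballot_succ_succ (s m : ℕ) :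
    ballot (s + 1) (m + 1) = ballot (s + 2) m + ballot s (m + 1) := by
  rw [ballot]

/-- The reflection principle for ballot numbers. -/
lemma ballot_succ_add_choose (s m : ℕ) :
    ballot s (m + 1) + (2 * m + s + 1).choose m = (2 * m + s + 1).choose (m + 1) := by
  induction m generalizing s with
  | zero =>
    induction s with
    | zero => simp
    | succ s ih => simp [ballot_succ_succ] at ih ⊢; omega
  | succ m ihm =>
    induction s with
    | zero =>
      simp only [ballot_zero_succ, zero_add]
      rw [Nat.choose_symm_of_eq_add]; omega
    | succ s ih =>
      have h := ihm (s + 2)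
      rw [ballot_succ_succ, show 2 * (m + 1) + (s + 1) + 1 = (2 * (m + 1) + s + 1) + 1 by ring,
        Nat.choose_succ_succ, Nat.choose_succ_succ _ (m + 1)]
      rw [show 2 * m + (s + 2) + 1 = 2 * (m + 1) + s + 1 by ring] at h
      simp only [Nat.succ_eq_add_one] at *
      omega

lemma mul_ballot_one (m : ℕ) : m * ballot 1 m = (2 * m).choose (m + 1) := by
  cases m with
  | zero => simp
  | succ m =>
    have h := ballot_succ_add_choose 1 m
    have h' := Nat.choose_succ_right_eq (2 * m + 1 + 1) m
    have h'' : (2 * (m + 1)).choose (m + 1 + 1) = (2 * m + 1 + 1).choose m := by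
      rw [show 2 * (m + 1) = 2 * m + 1 + 1 by ring, Nat.choose_symm_of_eq_add]; omega
    rw [h'']
    rw [show 2 * m + 1 + 1 - m = m + 2 by omega] at h'
    nlinarith

open Finset in
/-- Splitting `s + t` first passages after the first `s` of them. -/
lemma sum_ballot_mul_ballot (s t m : ℕ) :
    ∑ p ∈ antidiagonal m, ballot s p.1 * ballot t p.2 = ballot (s + t) m := by
  induction m generalizing s with
  | zero => simp
  | succ m ihm =>
    induction s with
    | zero => simp [Nat.sum_antidiagonal_succ]
    | succ s ih =>
      rw [Nat.sum_antidiagonal_succ] at ih ⊢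
      simp only [ballot_succ_succ, add_mul, sum_add_distrib, ihm, ballot_zero_right] at ih ⊢
      rw [show s + 1 + t = s + t + 1 by ring, ballot_succ_succ, ← ih]
      ring_nf

open Finset in
lemma sum_choose_mul_ballot (s m : ℕ) :
    ∑ p ∈ antidiagonal m, (2 * p.1).choose (p.1 + 1) * ballot s p.2
      = (2 * m + s).choose (m + s + 1) := by
  induction m generalizing s with
  | zero => simp
  | succ m ihm =>
    induction s with
    | zero => simp [Nat.sum_antidiagonal_succ']
    | succ s ih =>
      rw [Nat.sum_antidiagonal_succ'] at ih ⊢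
      simp only [ballot_succ_succ, mul_add (Nat.choose _ _), sum_add_distrib, ihm,
        ballot_zero_right] at ih ⊢
      rw [show 2 * (m + 1) + (s + 1) = (2 * (m + 1) + s) + 1 by ring,
        show m + 1 + (s + 1) + 1 = (m + 1 + s + 1) + 1 by ring, Nat.choose_succ_succ, ← ih]
      rw [show 2 * m + (s + 2) = 2 * (m + 1) + s by ring,
        show m + (s + 2) + 1 = m + 1 + s + 1 + 1 by ring]
      ring

open Finset in
/-- The number of pairs formed by a nonnegative path from height `h` to `0` marked at a down
step and a sequence of `k` first passages, with `m` up steps in total. -/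
def markedBallot (k h m : ℕ) : ℕ :=
  ∑ p ∈ antidiagonal m, (p.1 + h) * ballot (h + 1) p.1 * ballot k p.2

lemma markedBallot_zero_zero (k : ℕ) : markedBallot k 0 0 = 0 := by
  simp [markedBallot]

lemma markedBallot_succ_zero (k h : ℕ) :
    markedBallot k (h + 1) 0 = markedBallot k h 0 + ballot (h + 1 + k) 0 := by
  simp [markedBallot]

lemma markedBallot_zero_succ (k m : ℕ) :
    markedBallot k 0 (m + 1) = markedBallot k 1 m := by
  simp [markedBallot, Finset.Nat.sum_antidiagonal_succ, ballot_succ_succ]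

lemma markedBallot_succ_succ (k h m : ℕ) :
    markedBallot k (h + 1) (m + 1)
      = markedBallot k (h + 2) m + (markedBallot k h (m + 1) + ballot (h + 1 + k) (m + 1)) := by
  rw [← sum_ballot_mul_ballot]
  simp only [markedBallot, Finset.Nat.sum_antidiagonal_succ, ballot_zero_right,
    ballot_succ_succ (h + 1), add_mul, mul_add, Finset.sum_add_distrib]
  ring_nf
  simp only [Finset.sum_mul]
  ring

lemma markedBallot_zero (k m : ℕ) : markedBallot k 0 m = (2 * m + k).choose (m + k + 1) := by
  simp [markedBallot, mul_ballot_one, sum_choose_mul_ballot]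

lemma encard_setOf_fst_snd_of_const {α β : Type*} {X : Set α} {Y : α → Set β} {a c : ℕ}
    (hX : X.encard = a) (hY : ∀ x ∈ X, (Y x).encard = c) :
    {p : α × β | p.1 ∈ X ∧ p.2 ∈ Y p.1}.encard = (a * c : ℕ) := by
  have hfin : X.Finite := Set.finite_of_encard_eq_coe hX
  have h : {p : α × β | p.1 ∈ X ∧ p.2 ∈ Y p.1} = ⋃ x ∈ X, Prod.mk x '' Y x := by
    ext ⟨x, y⟩; simp [and_comm]
  rw [h, hfin.encard_biUnion]
  · rw [finsum_mem_congr rfl fun x hx => by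
      rw [(Prod.mk_right_injective x).encard_image, hY x hx],
      finsum_mem_eq_finite_toFinset_sum _ hfin, Finset.sum_const,
      ← Set.ncard_eq_toFinset_card X hfin, Set.ncard_def, hX]
    simp
  · intro x _ x' _ hne
    refine Set.disjoint_left.2 ?_
    rintro _ ⟨y, _, rfl⟩ ⟨y', _, h⟩
    exact hne (congrArg Prod.fst h).symm

open Finset in
lemma encard_setOf_add_eq {α β : Type*} {X : Set α} {Y : Set β} {f : α → ℕ} {g : β → ℕ}
    {a b : ℕ → ℕ} (hX : ∀ i, {x | x ∈ X ∧ f x = i}.encard = a i)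
    (hY : ∀ i, {y | y ∈ Y ∧ g y = i}.encard = b i) (m : ℕ) :
    {p : α × β | p.1 ∈ X ∧ p.2 ∈ Y ∧ f p.1 + g p.2 = m}.encard
      = (∑ q ∈ antidiagonal m, a q.1 * b q.2 : ℕ) := by
  have h : {p : α × β | p.1 ∈ X ∧ p.2 ∈ Y ∧ f p.1 + g p.2 = m}
      = ⋃ q ∈ (antidiagonal m : Set (ℕ × ℕ)),
          {x | x ∈ X ∧ f x = q.1} ×ˢ {y | y ∈ Y ∧ g y = q.2} := by
    ext ⟨x, y⟩
    simp only [Set.mem_ofPred_eq, Set.mem_iUnion, Set.mem_prod, mem_coe,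
      HasAntidiagonal.mem_antidiagonal, exists_prop, Prod.exists]
    constructor
    · rintro ⟨hx, hy, hm⟩
      exact ⟨_, _, hm, ⟨hx, rfl⟩, hy, rfl⟩
    · rintro ⟨_, _, hm, ⟨hx, rfl⟩, hy, rfl⟩
      exact ⟨hx, hy, hm⟩
  rw [h, (Finset.finite_toSet _).encard_biUnion]
  · simp_rw [Set.encard_prod, hX, hY]
    rw [finsum_mem_coe_finset]
    push_cast
    rfl
  · rintro ⟨i, j⟩ _ ⟨i', j'⟩ _ hne
    refine Set.disjoint_left.2 ?_
    rintro ⟨x, y⟩ hq hr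
    simp only [Set.mem_prod, Set.mem_ofPred_eq] at hq hr
    exact hne (by rw [← hq.1.2, ← hq.2.2, ← hr.1.2, ← hr.2.2])

/-- A nonnegative path which starts at height `h` and ends at height `0`. -/
def IsDyckFrom (h : ℕ) (w : List Bool) : Prop :=
  w.count false = w.count true + h ∧ ∀ p, p <+: w → p.count false ≤ p.count true + h

lemma isDyckPath_iff_isDyckFrom (w : List Bool) : IsDyckPath w ↔ IsDyckFrom 0 w := by
  simp [IsDyckPath, IsDyckFrom, eq_comm]

lemma isDyckWord_iff_isDyckFrom (n : ℕ) (w : List Bool) :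
    IsDyckWord n w ↔ IsDyckFrom 0 w ∧ w.count true = n := by
  simp only [IsDyckWord, IsDyckFrom, add_zero]
  constructor
  · rintro ⟨h, h', h''⟩
    exact ⟨⟨by omega, h''⟩, h⟩
  · rintro ⟨⟨h, h'⟩, h''⟩
    exact ⟨h'', by omega, h'⟩

lemma isDyckFrom_nil (h : ℕ) : IsDyckFrom h [] ↔ h = 0 := by
  simp +contextual [IsDyckFrom, eq_comm]

lemma isDyckFrom_true_cons (h : ℕ) (w : List Bool) :
    IsDyckFrom h (true :: w) ↔ IsDyckFrom (h + 1) w := by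
  simp only [IsDyckFrom, List.prefix_cons_iff]
  refine and_congr (by simp; omega) ⟨fun H p hp => ?_, ?_⟩
  · have := H (true :: p) (.inr ⟨p, rfl, hp⟩)
    simp at this; omega
  · rintro H _ (rfl | ⟨p, rfl, hp⟩)
    · simp
    · have := H p hp
      simp; omega

lemma isDyckFrom_succ_false_cons (h : ℕ) (w : List Bool) :
    IsDyckFrom (h + 1) (false :: w) ↔ IsDyckFrom h w := by
  simp only [IsDyckFrom, List.prefix_cons_iff]
  refine and_congr (by simp; omega) ⟨fun H p hp => ?_, ?_⟩
  · have := H (false :: p) (.inr ⟨p, rfl, hp⟩)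
    simp at this; omega
  · rintro H _ (rfl | ⟨p, rfl, hp⟩)
    · simp
    · have := H p hp
      simp; omega

lemma not_isDyckFrom_zero_false_cons (w : List Bool) : ¬ IsDyckFrom 0 (false :: w) := by
  intro H
  simpa using H.2 [false] (by simp)

lemma encard_union_image {α β : Type*} {s : Set α} {s' : Set β} {γ : Type*} {f : α → γ}
    {g : β → γ} (hf : f.Injective) (hg : g.Injective) (h : ∀ x y, f x ≠ g y) :
    (f '' s ∪ g '' s').encard = s.encard + s'.encard := by
  rw [Set.encard_union_eq, hf.encard_image, hg.encard_image]
  refine Set.disjoint_left.2 ?_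
  rintro _ ⟨x, _, rfl⟩ ⟨y, _, hy⟩
  exact h x y hy.symm

lemma encard_isDyckFrom (h m : ℕ) :
    {w | IsDyckFrom h w ∧ w.count true = m}.encard = ballot (h + 1) m := by
  induction m generalizing h with
  | zero =>
    induction h with
    | zero =>
      have : {w | IsDyckFrom 0 w ∧ w.count true = 0} = {[]} := by
        ext (_ | ⟨_ | _, w⟩) <;> simp [isDyckFrom_nil, not_isDyckFrom_zero_false_cons]
      simp [this]
    | succ h ih =>
      have : {w | IsDyckFrom (h + 1) w ∧ w.count true = 0}
          = List.cons false '' {w | IsDyckFrom h w ∧ w.count true = 0} := by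
        ext (_ | ⟨_ | _, w⟩) <;> simp [isDyckFrom_nil, isDyckFrom_succ_false_cons]
      rw [this, List.cons_injective.encard_image, ih]
      simp
  | succ m ihm =>
    induction h with
    | zero =>
      have : {w | IsDyckFrom 0 w ∧ w.count true = m + 1}
          = List.cons true '' {w | IsDyckFrom 1 w ∧ w.count true = m} := by
        ext (_ | ⟨_ | _, w⟩) <;>
          simp [isDyckFrom_nil, not_isDyckFrom_zero_false_cons, isDyckFrom_true_cons]
      rw [this, List.cons_injective.encard_image, ihm]
      simp [ballot_succ_succ]
    | succ h ih =>
      have : {w | IsDyckFrom (h + 1) w ∧ w.count true = m + 1}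
          = List.cons true '' {w | IsDyckFrom (h + 2) w ∧ w.count true = m} ∪
            List.cons false '' {w | IsDyckFrom h w ∧ w.count true = m + 1} := by
        ext (_ | ⟨_ | _, w⟩) <;>
          simp [isDyckFrom_nil, isDyckFrom_succ_false_cons, isDyckFrom_true_cons]
      rw [this, encard_union_image List.cons_injective List.cons_injective (by simp), ihm, ih,
        ballot_succ_succ (h + 1)]
      simp

lemma encard_isDyckPath (m : ℕ) :
    {w | IsDyckPath w ∧ w.count true = m}.encard = ballot 1 m := by
  simp only [isDyckPath_iff_isDyckFrom, encard_isDyckFrom]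

lemma encard_pi_isDyckPath (k m : ℕ) :
    {f : Fin k → List Bool | (∀ j, IsDyckPath (f j)) ∧ ∑ j, (f j).count true = m}.encard
      = ballot k m := by
  induction k generalizing m with
  | zero => cases m <;> simp
  | succ k ih =>
    have h := encard_setOf_add_eq (X := {w | IsDyckPath w}) (f := List.count true)
      (Y := {f : Fin k → List Bool | ∀ j, IsDyckPath (f j)})
      (g := fun f => ∑ j, (f j).count true) encard_isDyckPath ih m
    rw [sum_ballot_mul_ballot, add_comm] at h
    rw [← h, ← (Fin.consEquiv fun _ => List Bool).injective.encard_image]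
    congr 1
    ext f
    constructor
    · rintro ⟨hf, hm⟩
      refine ⟨(f 0, fun j => f j.succ), ⟨hf 0, fun j => hf _, ?_⟩, ?_⟩
      · rwa [Fin.sum_univ_succ] at hm
      · exact Fin.cons_self_tail f
    · rintro ⟨⟨w, g⟩, ⟨hw, hg, hm⟩, rfl⟩
      refine ⟨Fin.cases hw hg, ?_⟩
      rw [Fin.sum_univ_succ]
      exact hm

lemma encard_getD_eq_false (w : List Bool) :
    {q | q < w.length ∧ w.getD q true = false}.encard = w.count false := by
  induction w with
  | nil => simp
  | cons x w ih =>
    cases x with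
    | true =>
      have : {q | q < (true :: w).length ∧ (true :: w).getD q true = false}
          = Nat.succ '' {q | q < w.length ∧ w.getD q true = false} := by
        ext (_ | q) <;> simp
      rw [this, Nat.succ_injective.encard_image, ih]
      simp
    | false =>
      have : {q | q < (false :: w).length ∧ (false :: w).getD q true = false}
          = insert 0 (Nat.succ '' {q | q < w.length ∧ w.getD q true = false}) := by
        ext (_ | q) <;> simp
      rw [this, Set.encard_insert_of_notMem (by simp), Nat.succ_injective.encard_image, ih]
      simp

lemma encard_marked_isDyckPath (m : ℕ) :
    {p : List Bool × ℕ | (IsDyckPath p.1 ∧ p.2 < p.1.length ∧ p.1.getD p.2 true = false) ∧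
      p.1.count true = m}.encard = (m * ballot 1 m : ℕ) := by
  have h := encard_setOf_fst_snd_of_const (encard_isDyckPath m)
    (Y := fun w => {q | q < w.length ∧ w.getD q true = false}) (c := m)
    fun w hw => by rw [encard_getD_eq_false, ← hw.1.1, hw.2]
  rw [mul_comm, ← h]
  congr 1
  ext p
  simp only [Set.mem_ofPred_eq]
  tauto

/-- Sequences of `k + 1` Dyck words of total size `m`, the first one marked at a down step. -/
def markedDyckSequences (k m : ℕ) : Set ((List Bool × ℕ) × (Fin k → List Bool)) :=
  {s | IsDyckPath s.1.1 ∧ s.1.2 < s.1.1.length ∧ s.1.1.getD s.1.2 true = false ∧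
    (∀ j, IsDyckPath (s.2 j)) ∧ s.1.1.count true + ∑ j, (s.2 j).count true = m}

lemma encard_markedDyckSequences (k m : ℕ) :
    (markedDyckSequences k m).encard = markedBallot k 0 m := by
  have h := encard_setOf_add_eq
    (X := {p : List Bool × ℕ | IsDyckPath p.1 ∧ p.2 < p.1.length ∧ p.1.getD p.2 true = false})
    (f := fun p => p.1.count true)
    (Y := {f : Fin k → List Bool | ∀ j, IsDyckPath (f j)})
    (g := fun f => ∑ j, (f j).count true) encard_marked_isDyckPath (encard_pi_isDyckPath k) m
  rw [markedBallot]
  simp only [add_zero, zero_add]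
  rw [← h]
  congr 1
  ext s
  simp only [markedDyckSequences, Set.mem_ofPred_eq]
  tauto

/-- `IsExcursions ε i a c w`: `w` consists of a first passage of the `ε`-elevation to `-a`
followed by `c` consecutive `ε`-excursions, where the first up step of `w` has index `i + 1`. -/
def IsExcursions (ε : ℕ → ℕ) : ℕ → ℕ → ℕ → List Bool → Prop
  | _, 0, 0, w => w = []
  | i, 0, c + 1, true :: w => IsExcursions ε (i + 1) (ε (i + 1)) c w
  | _, 0, _ + 1, _ => False
  | i, a + 1, c, true :: w => IsExcursions ε (i + 1) (a + 1 + ε (i + 1)) c w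
  | i, a + 1, c, false :: w => IsExcursions ε i a c w
  | _, _ + 1, _, [] => False

namespace IsExcursions

variable {ε : ℕ → ℕ}

@[simp] lemma zero_zero_iff {i : ℕ} {w : List Bool} : IsExcursions ε i 0 0 w ↔ w = [] := by
  simp [IsExcursions]

@[simp] lemma not_zero_succ_nil {i c : ℕ} : ¬ IsExcursions ε i 0 (c + 1) [] := by
  simp [IsExcursions]

@[simp] lemma not_zero_succ_false_cons {i c : ℕ} {w : List Bool} :
    ¬ IsExcursions ε i 0 (c + 1) (false :: w) := by
  simp [IsExcursions]

@[simp] lemma zero_succ_true_cons_iff {i c : ℕ} {w : List Bool} :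
    IsExcursions ε i 0 (c + 1) (true :: w) ↔ IsExcursions ε (i + 1) (ε (i + 1)) c w := by
  simp [IsExcursions]

@[simp] lemma not_succ_nil {i a c : ℕ} : ¬ IsExcursions ε i (a + 1) c [] := by
  simp [IsExcursions]

@[simp] lemma succ_true_cons_iff {i a c : ℕ} {w : List Bool} :
    IsExcursions ε i (a + 1) c (true :: w)
      ↔ IsExcursions ε (i + 1) (a + 1 + ε (i + 1)) c w := by
  simp [IsExcursions]

@[simp] lemma succ_false_cons_iff {i a c : ℕ} {w : List Bool} :
    IsExcursions ε i (a + 1) c (false :: w) ↔ IsExcursions ε i a c w := by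
  simp [IsExcursions]

lemma exists_eq_true_cons {i c : ℕ} {w : List Bool} (h : IsExcursions ε i 0 (c + 1) w) :
    ∃ v, w = true :: v := by
  obtain _ | ⟨_ | _, v⟩ := w
  · simp at h
  · simp at h
  · exact ⟨v, rfl⟩

lemma le_count {i a c : ℕ} {w : List Bool} (h : IsExcursions ε i a c w) :
    c ≤ w.count true := by
  induction w generalizing i a c with
  | nil => cases a <;> cases c <;> simp at h ⊢
  | cons x w ih =>
    cases a <;> cases c <;> cases x <;> simp at h ⊢
    · exact ih h
    · exact ih h
    · exact (Nat.le_succ _).trans (ih h)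

/-- Sequences of excursions form a prefix code. -/
lemma eq_of_append_eq {i a c : ℕ} {w w' v v' : List Bool} (h : IsExcursions ε i a c w)
    (h' : IsExcursions ε i a c w') (e : w ++ v = w' ++ v') : w = w' := by
  induction w generalizing i a c w' with
  | nil => cases a <;> cases c <;> simp at h h' ⊢; exact h'
  | cons x w ih =>
    cases w' with
    | nil => cases a <;> cases c <;> simp at h h'
    | cons y w' =>
      obtain ⟨rfl, e'⟩ : x = y ∧ w ++ v = w' ++ v' := by simpa using e
      cases a <;> cases c <;> cases x <;> simp at h h' ⊢ <;> exact ih h h' e'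

lemma iff_exists_append {i a c : ℕ} {w : List Bool} :
    IsExcursions ε i a c w ↔ ∃ v v', w = v ++ v' ∧ IsExcursions ε i a 0 v ∧
      IsExcursions ε (i + v.count true) 0 c v' := by
  induction w generalizing i a c with
  | nil => cases a <;> cases c <;> simp
  | cons x w ih =>
    cases a with
    | zero => simp
    | succ a =>
      cases x with
      | true =>
        rw [succ_true_cons_iff, ih]
        constructor
        · rintro ⟨v, v', rfl, hv, hv'⟩
          exact ⟨true :: v, v', rfl, by simpa using hv, by
            simpa [add_assoc, add_comm 1] using hv'⟩
        · rintro ⟨_ | ⟨_, v⟩, v', e, hv, hv'⟩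
          · simp at hv
          · obtain ⟨rfl, rfl⟩ : true = _ ∧ w = v ++ v' := by simpa using e
            exact ⟨v, v', rfl, by simpa using hv, by
              simpa [add_assoc, add_comm 1] using hv'⟩
      | false =>
        rw [succ_false_cons_iff, ih]
        constructor
        · rintro ⟨v, v', rfl, hv, hv'⟩
          exact ⟨false :: v, v', rfl, by simpa using hv, by simpa using hv'⟩
        · rintro ⟨_ | ⟨_, v⟩, v', e, hv, hv'⟩
          · simp at hv
          · obtain ⟨rfl, rfl⟩ : false = _ ∧ w = v ++ v' := by simpa using e
            exact ⟨v, v', rfl, by simpa using hv, by simpa using hv'⟩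

lemma zero_succ_iff_exists_append {i c : ℕ} {w : List Bool} :
    IsExcursions ε i 0 (c + 1) w ↔ ∃ v v', w = v ++ v' ∧ IsExcursions ε i 0 1 v ∧
      IsExcursions ε (i + v.count true) 0 c v' := by
  constructor
  · intro h
    obtain _ | ⟨_ | _, w⟩ := w
    · simp at h
    · simp at h
    · rw [zero_succ_true_cons_iff, iff_exists_append] at h
      obtain ⟨v, v', rfl, hv, hv'⟩ := h
      exact ⟨true :: v, v', rfl, by simpa using hv, by simpa [add_assoc, add_comm 1] using hv'⟩
  · rintro ⟨_ | ⟨_ | _, v⟩, v', rfl, hv, hv'⟩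
    · simp at hv
    · simp at hv
    · rw [List.cons_append, zero_succ_true_cons_iff, iff_exists_append]
      exact ⟨v, v', rfl, by simpa using hv, by simpa [add_assoc, add_comm 1] using hv'⟩

end IsExcursions

lemma encard_isExcursions {ε : ℕ → ℕ} (hε : ∀ i, ε i ≤ 1) :
    ∀ (m c a i h : ℕ), a ≤ h →
      {p : List Bool × List Bool | IsExcursions ε i a c p.1 ∧ IsDyckFrom h (p.1 ++ p.2) ∧
        (p.1 ++ p.2).count true = m + c}.encard = ballot (h + 1 + c) m
  | m, 0, 0, i, h, _ => by
    rw [add_zero, ← encard_isDyckFrom,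
      ← (Prod.mk_right_injective (β := List Bool) ([] : List Bool)).encard_image]
    congr 1
    ext ⟨w, v⟩
    cases w <;> simp
  | m, c + 1, 0, i, h, _ => by
    have hs : {p : List Bool × List Bool | IsExcursions ε i 0 (c + 1) p.1 ∧
          IsDyckFrom h (p.1 ++ p.2) ∧ (p.1 ++ p.2).count true = m + (c + 1)}
        = Prod.map (List.cons true) id '' {p : List Bool × List Bool |
            IsExcursions ε (i + 1) (ε (i + 1)) c p.1 ∧ IsDyckFrom (h + 1) (p.1 ++ p.2) ∧
            (p.1 ++ p.2).count true = m + c} := by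
      ext ⟨_ | ⟨_ | _, w⟩, v⟩ <;> simp [isDyckFrom_true_cons, ← add_assoc]
      intros; omega
    rw [hs, (List.cons_injective.prodMap Function.injective_id).encard_image,
      encard_isExcursions hε m c _ _ _ ((hε _).trans (by omega))]
    congr 2
    ring
  | m, c, a + 1, i, 0, ha => by omega
  | 0, c, a + 1, i, h + 1, ha => by
    have hs : {p : List Bool × List Bool | IsExcursions ε i (a + 1) c p.1 ∧
          IsDyckFrom (h + 1) (p.1 ++ p.2) ∧ (p.1 ++ p.2).count true = 0 + c}
        = Prod.map (List.cons false) id '' {p : List Bool × List Bool |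
            IsExcursions ε i a c p.1 ∧ IsDyckFrom h (p.1 ++ p.2) ∧
            (p.1 ++ p.2).count true = 0 + c} := by
      ext ⟨_ | ⟨_ | _, w⟩, v⟩ <;> simp [isDyckFrom_succ_false_cons]
      intro hw _
      have := hw.le_count
      omega
    rw [hs, (List.cons_injective.prodMap Function.injective_id).encard_image,
      encard_isExcursions hε 0 c a i h (by omega)]
    simp
  | m + 1, c, a + 1, i, h + 1, ha => by
    have hs : {p : List Bool × List Bool | IsExcursions ε i (a + 1) c p.1 ∧
          IsDyckFrom (h + 1) (p.1 ++ p.2) ∧ (p.1 ++ p.2).count true = m + 1 + c}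
        = Prod.map (List.cons true) id '' {p : List Bool × List Bool |
            IsExcursions ε (i + 1) (a + 1 + ε (i + 1)) c p.1 ∧
            IsDyckFrom (h + 2) (p.1 ++ p.2) ∧ (p.1 ++ p.2).count true = m + c} ∪
          Prod.map (List.cons false) id '' {p : List Bool × List Bool |
            IsExcursions ε i a c p.1 ∧ IsDyckFrom h (p.1 ++ p.2) ∧
            (p.1 ++ p.2).count true = m + 1 + c} := by
      ext ⟨_ | ⟨_ | _, w⟩, v⟩ <;>
        simp [isDyckFrom_succ_false_cons, isDyckFrom_true_cons, add_right_comm _ 1]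
    rw [hs, encard_union_image (List.cons_injective.prodMap Function.injective_id)
        (List.cons_injective.prodMap Function.injective_id) (by simp),
      encard_isExcursions hε m c _ _ _ (by have := hε (i + 1); omega),
      encard_isExcursions hε (m + 1) c a i h (by omega),
      show h + 1 + 1 + c = h + 1 + c + 1 by ring, ballot_succ_succ,
      show h + 2 + 1 + c = h + 1 + c + 2 by ring]
    simp
termination_by m c a => (m, c, a)

/-- The factorizations `A d F B` of a path from height `h`, where `F` consists of `k`
`ε`-excursions and the first up step of the path has index `i + 1`. -/
def excursionFactorizations (ε : ℕ → ℕ) (k h i m : ℕ) :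
    Set (List Bool × List Bool × List Bool) :=
  {t | IsExcursions ε (i + t.1.count true) 0 k t.2.1 ∧
    IsDyckFrom h (t.1 ++ false :: (t.2.1 ++ t.2.2)) ∧
    (t.1 ++ false :: (t.2.1 ++ t.2.2)).count true = m + k}

lemma encard_excursionFactorizations {ε : ℕ → ℕ} (hε : ∀ i, ε i ≤ 1) (k h i m : ℕ) :
    (excursionFactorizations ε k h i m).encard = markedBallot k h m := by
  have hinj (x : Bool) : Function.Injective
      (Prod.map (List.cons x) id : _ → List Bool × List Bool × List Bool) :=
    List.cons_injective.prodMap Function.injective_id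
  have hexc (h i m : ℕ) := encard_isExcursions hε m k 0 i h (Nat.zero_le h)
  induction m generalizing h i with
  | zero =>
    induction h with
    | zero =>
      rw [markedBallot_zero_zero, Nat.cast_zero, Set.encard_eq_zero]
      ext ⟨_ | ⟨_ | _, u⟩, v, w⟩ <;>
        simp [excursionFactorizations, not_isDyckFrom_zero_false_cons]
      intro hv _
      have := hv.le_count
      omega
    | succ h ih =>
      have hs : excursionFactorizations ε k (h + 1) i 0
          = Prod.map (List.cons false) id '' excursionFactorizations ε k h i 0 ∪
            Prod.mk [] '' {p : List Bool × List Bool | IsExcursions ε i 0 k p.1 ∧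
              IsDyckFrom h (p.1 ++ p.2) ∧ (p.1 ++ p.2).count true = 0 + k} := by
        ext ⟨_ | ⟨_ | _, u⟩, v, w⟩ <;>
          simp [excursionFactorizations, isDyckFrom_succ_false_cons]
        intro hv _
        have := hv.le_count
        omega
      rw [hs, encard_union_image (hinj _) (Prod.mk_right_injective []) (by simp), ih, hexc,
        markedBallot_succ_zero]
      simp
  | succ m ihm =>
    induction h with
    | zero =>
      have hs : excursionFactorizations ε k 0 i (m + 1)
          = Prod.map (List.cons true) id '' excursionFactorizations ε k 1 (i + 1) m := by
        ext ⟨_ | ⟨_ | _, u⟩, v, w⟩ <;>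
          simp [excursionFactorizations, not_isDyckFrom_zero_false_cons, isDyckFrom_true_cons,
            add_right_comm _ 1, add_assoc i]
      rw [hs, (hinj _).encard_image, ihm, markedBallot_zero_succ]
    | succ h ih =>
      have hs : excursionFactorizations ε k (h + 1) i (m + 1)
          = (Prod.map (List.cons true) id '' excursionFactorizations ε k (h + 2) (i + 1) m) ∪
            (Prod.map (List.cons false) id '' excursionFactorizations ε k h i (m + 1) ∪
            Prod.mk [] '' {p : List Bool × List Bool | IsExcursions ε i 0 k p.1 ∧
              IsDyckFrom h (p.1 ++ p.2) ∧ (p.1 ++ p.2).count true = m + 1 + k}) := by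
        ext ⟨_ | ⟨_ | _, u⟩, v, w⟩ <;>
          simp [excursionFactorizations, isDyckFrom_succ_false_cons, isDyckFrom_true_cons,
            add_right_comm _ 1, add_assoc i]
      rw [hs, Set.encard_union_eq, (hinj _).encard_image,
        encard_union_image (hinj _) (Prod.mk_right_injective []) (by simp), ihm, ih, hexc,
        markedBallot_succ_succ]
      · push_cast
        ring_nf
      · refine Set.disjoint_left.2 ?_
        rintro _ ⟨x, _, rfl⟩ (⟨y, _, hy⟩ | ⟨y, _, hy⟩) <;> simp [Prod.ext_iff] at hy

/-- The `δ`-elevation of a word whose first up step has index `i + 1`. -/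
def elevFrom (δ : ℕ → ℤ) : ℕ → List Bool → ℤ
  | _, [] => 0
  | i, true :: w => δ (i + 1) + elevFrom δ (i + 1) w
  | i, false :: w => -1 + elevFrom δ i w

lemma elev_append_eq_elevFrom (δ : ℕ → ℤ) (u v : List Bool) (m : ℕ) (hm : m ≤ v.length) :
    elev δ (u ++ v) u.length (u.length + m) = elevFrom δ (u.count true) (v.take m) := by
  induction v generalizing u m with
  | nil =>
    obtain rfl : m = 0 := by simpa using hm
    simp [elev, elevFrom]
  | cons x v ih =>
    cases m with
    | zero => simp [elev, elevFrom]
    | succ m =>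
      have h := ih (u ++ [x]) m (by simpa using hm)
      have hstep : stepVal δ (u ++ x :: v) u.length
          = if x = true then δ (u.count true + 1) else -1 := by
        cases x <;> simp [stepVal, List.take_append, List.take_of_length_le]
      rw [elev, Finset.sum_eq_sum_Ico_succ_bot (by omega), hstep]
      rw [elev, List.append_assoc, List.singleton_append, List.length_append,
        List.length_singleton, add_assoc, add_comm 1 m] at h
      rw [h]
      cases x <;> simp [elevFrom]

lemma isExcursions_zero_iff {δ : ℕ → ℤ} {ε : ℕ → ℕ} (hε : ∀ i, (ε i : ℤ) = δ i) {i a : ℕ}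
    {w : List Bool} : IsExcursions ε i a 0 w ↔
      elevFrom δ i w = -a ∧ ∀ m < w.length, elevFrom δ i (w.take m) ≠ -a := by
  induction w generalizing i a with
  | nil =>
    cases a with
    | zero => simp [elevFrom]
    | succ a => simp [elevFrom]; omega
  | cons x w ih =>
    cases a with
    | zero =>
      simp only [IsExcursions.zero_zero_iff, reduceCtorEq, false_iff, not_and, not_forall]
      exact fun _ => ⟨0, by simp, by simp [elevFrom]⟩
    | succ a =>
      have hforall (p : ℕ → Prop) (h0 : p 0) :
          (∀ m < (x :: w).length, p m) ↔ ∀ m < w.length, p (m + 1) := by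
        refine ⟨fun h m hm => h _ (by simpa using hm), fun h m hm => ?_⟩
        cases m with
        | zero => exact h0
        | succ m => exact h m (by simpa using hm)
      rw [hforall _ (by simp [elevFrom]; omega)]
      cases x with
      | true =>
        rw [IsExcursions.succ_true_cons_iff, ih]
        simp only [List.take_succ_cons, elevFrom]
        have := hε (i + 1)
        refine and_congr (by push_cast; omega) (forall₂_congr fun m _ => not_congr ?_)
        push_cast; omega
      | false =>
        rw [IsExcursions.succ_false_cons_iff, ih]
        simp only [List.take_succ_cons, elevFrom]
        refine and_congr (by push_cast; omega) (forall₂_congr fun m _ => not_congr ?_)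
        push_cast; omega

lemma isDeltaExcAt_append_iff {δ : ℕ → ℤ} {ε : ℕ → ℕ} (hε : ∀ i, (ε i : ℤ) = δ i)
    {u v w : List Bool} : IsDeltaExcAt δ (u ++ v) u.length w ↔
      w <+: v ∧ IsExcursions ε (u.count true) 0 1 w := by
  have hcons (w' : List Bool) : IsExcursions ε (u.count true) 0 1 (true :: w') ↔
      elevFrom δ (u.count true) (true :: w') = 0 ∧
      ∀ m, 0 < m → m < (true :: w').length →
        elevFrom δ (u.count true) ((true :: w').take m) ≠ 0 := by
    rw [IsExcursions.zero_succ_true_cons_iff, isExcursions_zero_iff hε, hε]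
    refine and_congr (by simp only [elevFrom]; omega) ⟨fun h m h0 hm => ?_, fun h m hm => ?_⟩
    · obtain ⟨m, rfl⟩ : ∃ m', m = m' + 1 := ⟨m - 1, by omega⟩
      have := h m (by simpa using hm)
      simp only [List.take_succ_cons, elevFrom]
      omega
    · have := h (m + 1) (by omega) (by simpa using hm)
      simp only [List.take_succ_cons, elevFrom] at this
      omega
  constructor
  · rintro ⟨h1, m, h0, hm, rfl, he, hmin⟩
    simp only [List.length_append, add_le_add_iff_left] at hm
    rw [elev_append_eq_elevFrom _ _ _ _ hm] at he
    simp only [List.drop_left]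
    refine ⟨List.take_prefix _ _, ?_⟩
    obtain ⟨m, rfl⟩ : ∃ m', m = m' + 1 := ⟨m - 1, by omega⟩
    obtain _ | ⟨x, v⟩ := v
    · simp at hm
    · obtain rfl : x = true := by simpa using h1
      rw [List.take_succ_cons, hcons]
      refine ⟨by simpa using he, fun m' h0' hm' => ?_⟩
      have hlt : m' < m + 1 := by
        simp only [List.length_cons, List.length_take] at hm'
        omega
      have := hmin m' h0' hlt
      rw [elev_append_eq_elevFrom _ _ _ _ (by omega)] at this
      rwa [← List.take_succ_cons, List.take_take, min_eq_left hlt.le]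
  · rintro ⟨⟨v', rfl⟩, hw⟩
    obtain _ | ⟨_ | _, w⟩ := w
    · simp at hw
    · simp at hw
    · rw [hcons] at hw
      refine ⟨by simp, (true :: w).length, by simp, by simp, ?_, ?_, fun m h0 hm => ?_⟩
      · rw [List.drop_left, List.take_left]
      · rw [elev_append_eq_elevFrom _ _ _ _ (by simp), List.take_left]
        exact hw.1
      · rw [elev_append_eq_elevFrom _ _ _ _ (by simp at hm ⊢; omega),
          List.take_append_of_le_length hm.le]
        exact hw.2 m h0 hm

lemma isExcursions_iff_exists_isDeltaExcAt {δ : ℕ → ℤ} {ε : ℕ → ℕ} (hε : ∀ i, (ε i : ℤ) = δ i)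
    (k : ℕ) (u w v : List Bool) : IsExcursions ε (u.count true) 0 k w ↔
      ∃ Cs : List (List Bool), Cs.length = k ∧ Cs.flatten = w ∧ ∀ j < k,
        IsDeltaExcAt δ (u ++ (w ++ v)) (u.length + ((Cs.take j).flatten).length)
          (Cs.getD j []) := by
  induction k generalizing u w with
  | zero => simp [List.length_eq_zero_iff, eq_comm]
  | succ k ih =>
    rw [IsExcursions.zero_succ_iff_exists_append]
    constructor
    · rintro ⟨C, w, rfl, hC, hw⟩
      rw [← List.count_append, ih] at hw
      obtain ⟨Cs, hlen, rfl, hCs⟩ := hw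
      refine ⟨C :: Cs, by simp [hlen], by simp, fun j hj => ?_⟩
      cases j with
      | zero =>
        rw [List.append_assoc]
        simpa using (isDeltaExcAt_append_iff hε).2 ⟨List.prefix_append _ _, hC⟩
      | succ j => simpa [add_assoc] using hCs j (by omega)
    · rintro ⟨_ | ⟨C, Cs⟩, hlen, rfl, hCs⟩
      · simp at hlen
      · refine ⟨C, Cs.flatten, by simp, ?_, ?_⟩
        · exact ((isDeltaExcAt_append_iff hε).1 (by simpa using hCs 0 (by omega))).2
        · rw [← List.count_append, ih]
          refine ⟨Cs, by simpa using hlen, rfl, fun j hj => ?_⟩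
          simpa [add_assoc] using hCs (j + 1) (by omega)

/-- Moving a down step to the right preserves nonnegativity. -/
lemma IsDyckFrom.append_move_false {h : ℕ} {u v w : List Bool}
    (H : IsDyckFrom h (u ++ false :: (v ++ w))) : IsDyckFrom h (u ++ (v ++ false :: w)) := by
  induction u generalizing h with
  | nil =>
    obtain _ | h := h
    · exact (not_isDyckFrom_zero_false_cons _ H).elim
    · rw [List.nil_append, isDyckFrom_succ_false_cons] at H
      rw [List.nil_append]
      induction v generalizing h with
      | nil => exact (isDyckFrom_succ_false_cons _ _).2 H
      | cons x v ih =>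
        cases x with
        | true =>
          rw [List.cons_append, isDyckFrom_true_cons] at H ⊢
          exact ih _ H
        | false =>
          obtain _ | h := h
          · exact (not_isDyckFrom_zero_false_cons _ H).elim
          · rw [List.cons_append, isDyckFrom_succ_false_cons] at H ⊢
            exact ih _ H
  | cons x u ih =>
    cases x with
    | true =>
      rw [List.cons_append, isDyckFrom_true_cons] at H ⊢
      exact ih H
    | false =>
      obtain _ | h := h
      · exact (not_isDyckFrom_zero_false_cons _ H).elim
      · rw [List.cons_append, isDyckFrom_succ_false_cons] at H ⊢
        exact ih H

lemma List.eq_of_append_cons_eq_of_ne {α : Type*} {x y : α} (hxy : x ≠ y)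
    {u u' v v' w w' : List α} (hv : u ++ x :: v = u' ++ x :: v')
    (hw : u ++ y :: w = u' ++ y :: w') : u = u' := by
  induction u generalizing u' with
  | nil =>
    obtain _ | ⟨z, u'⟩ := u'
    · rfl
    · simp only [List.nil_append, List.cons_append, List.cons.injEq] at hv hw
      exact (hxy (hv.1.trans hw.1.symm)).elim
  | cons z u ih =>
    obtain _ | ⟨z', u'⟩ := u'
    · simp only [List.nil_append, List.cons_append, List.cons.injEq] at hv hw
      exact (hxy (hv.1.symm.trans hw.1)).elim
    · simp only [List.cons_append, List.cons.injEq] at hv hw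
      rw [hv.1, ih hv.2 hw.2]

/-- The right intervals of height `k` in `Tam^δ_n`. -/
def rightIntervals (δ : ℕ → ℤ) (n k : ℕ) : Set (List Bool × List Bool) :=
  {pq | IsDyckWord n pq.1 ∧ IsDyckWord n pq.2 ∧
    ∃ (A B : List Bool) (Cs : List (List Bool)), Cs.length = k ∧
      pq.1 = A ++ false :: (Cs.flatten ++ B) ∧
      pq.2 = A ++ (Cs.flatten ++ false :: B) ∧
      ∀ j < k, IsDeltaExcAt δ pq.1 (A.length + 1 + ((Cs.take j).flatten).length)
        (Cs.getD j [])}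

lemma mem_rightIntervals_iff {δ : ℕ → ℤ} {ε : ℕ → ℕ} (hε : ∀ i, (ε i : ℤ) = δ i) {n k : ℕ}
    {pq : List Bool × List Bool} : pq ∈ rightIntervals δ n k ↔
      ∃ A F B : List Bool, IsExcursions ε (A.count true) 0 k F ∧
        IsDyckWord n (A ++ false :: (F ++ B)) ∧
        pq = (A ++ false :: (F ++ B), A ++ (F ++ false :: B)) := by
  obtain ⟨P, Q⟩ := pq
  have hexc (A F B : List Bool) := isExcursions_iff_exists_isDeltaExcAt hε k (A ++ [false]) F B
  simp only [List.append_assoc, List.singleton_append, List.count_append, List.length_append,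
    List.length_singleton, List.count_singleton, Bool.false_eq_true, beq_iff_eq, if_false,
    add_zero] at hexc
  constructor
  · rintro ⟨hP, -, A, B, Cs, hlen, rfl, rfl, hCs⟩
    exact ⟨A, Cs.flatten, B, (hexc _ _ B).2 ⟨Cs, hlen, rfl, hCs⟩, hP, rfl⟩
  · rintro ⟨A, F, B, hF, hP, ⟨⟩⟩
    obtain ⟨Cs, hlen, rfl, hCs⟩ := (hexc _ _ B).1 hF
    refine ⟨hP, ?_, A, B, Cs, hlen, rfl, rfl, hCs⟩
    rw [isDyckWord_iff_isDyckFrom] at hP ⊢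
    refine ⟨hP.1.append_move_false, ?_⟩
    simpa using hP.2

lemma encard_rightIntervals {δ : ℕ → ℤ} (hδ : IsIncFun δ) {n k : ℕ} (hk : k ≠ 0) :
    (rightIntervals δ n k).encard = markedBallot k 0 (n - k) := by
  set ε : ℕ → ℕ := fun i => (δ i).toNat
  have hε (i : ℕ) : (ε i : ℤ) = δ i := by rcases hδ i with h | h <;> simp [ε, h]
  have hε' (i : ℕ) : ε i ≤ 1 := by rcases hδ i with h | h <;> simp [ε, h]
  obtain hkn | hkn := le_or_gt k n
  · rw [← encard_excursionFactorizations hε' k 0 0]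
    have himage : rightIntervals δ n k
        = (fun t : List Bool × List Bool × List Bool =>
            (t.1 ++ false :: (t.2.1 ++ t.2.2), t.1 ++ (t.2.1 ++ false :: t.2.2))) ''
          excursionFactorizations ε k 0 0 (n - k) := by
      ext pq
      rw [mem_rightIntervals_iff hε]
      simp only [excursionFactorizations, Set.mem_image, Set.mem_ofPred_eq, Prod.exists, zero_add,
        isDyckWord_iff_isDyckFrom, Nat.sub_add_cancel hkn, and_assoc, eq_comm]
    rw [himage, Set.InjOn.encard_image]
    rintro ⟨A, F, B⟩ ⟨hF, -⟩ ⟨A', F', B'⟩ ⟨hF', -⟩ e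
    obtain ⟨k, rfl⟩ := Nat.exists_eq_succ_of_ne_zero hk
    simp only [Prod.mk.injEq, zero_add] at e hF hF'
    obtain ⟨G, rfl⟩ := hF.exists_eq_true_cons
    obtain ⟨G', rfl⟩ := hF'.exists_eq_true_cons
    obtain rfl : A = A' := List.eq_of_append_cons_eq_of_ne (by simp) e.1 e.2
    have hFB := e.1
    simp only [List.append_cancel_left_eq, List.cons.injEq, true_and] at hFB
    obtain rfl : G = G' := List.cons_injective (hF.eq_of_append_eq hF' hFB)
    simpa using hFB
  · rw [Nat.sub_eq_zero_of_le hkn.le, markedBallot_zero_zero, Nat.cast_zero, Set.encard_eq_zero,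
      Set.eq_empty_iff_forall_notMem]
    intro pq hpq
    obtain ⟨A, F, B, hF, hP, -⟩ := (mem_rightIntervals_iff hε).1 hpq
    have h1 := hF.le_count
    have h2 := hP.1
    simp at h2
    omega

/-- right intervals of height `k ≥ 2` in `Tam^δ_n` are in bijection with
sequences `(P₀, P₁, …, P_k)` of Dyck words, `P₀` marked at one of its down steps, whose
sizes add up to `n - k`; in particular there are `binom (2n-k) (n+1)` of them. -/
theorem stmt19 (n k : ℕ) (hn : 1 ≤ n) (hk : 2 ≤ k) (δ : ℕ → ℤ) (hδ : IsIncFun δ) :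
    Nonempty (
      {pq : List Bool × List Bool // IsDyckWord n pq.1 ∧ IsDyckWord n pq.2 ∧
        ∃ (A B : List Bool) (Cs : List (List Bool)), Cs.length = k ∧
          pq.1 = A ++ false :: (Cs.flatten ++ B) ∧
          pq.2 = A ++ (Cs.flatten ++ false :: B) ∧
          ∀ j < k, IsDeltaExcAt δ pq.1 (A.length + 1 + ((Cs.take j).flatten).length)
            (Cs.getD j [])} ≃
      {s : (List Bool × ℕ) × (Fin k → List Bool) //
        IsDyckPath s.1.1 ∧ s.1.2 < s.1.1.length ∧ s.1.1.getD s.1.2 true = false ∧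
        (∀ j, IsDyckPath (s.2 j)) ∧
        s.1.1.count true + ∑ j, (s.2 j).count true = n - k}) ∧
    {pq : List Bool × List Bool | IsDyckWord n pq.1 ∧ IsDyckWord n pq.2 ∧
        ∃ (A B : List Bool) (Cs : List (List Bool)), Cs.length = k ∧
          pq.1 = A ++ false :: (Cs.flatten ++ B) ∧
          pq.2 = A ++ (Cs.flatten ++ false :: B) ∧
          ∀ j < k, IsDeltaExcAt δ pq.1 (A.length + 1 + ((Cs.take j).flatten).length)
            (Cs.getD j [])}.ncard
      = (2 * n - k).choose (n + 1) := by
  have hL := encard_rightIntervals hδ (n := n) (k := k) (by omega)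
  have hR := encard_markedDyckSequences k (n - k)
  refine ⟨?_, ?_⟩
  · have : Finite (rightIntervals δ n k) := Set.finite_of_encard_eq_coe hL
    have : Finite (markedDyckSequences k (n - k)) := Set.finite_of_encard_eq_coe hR
    exact (Finite.card_eq (α := rightIntervals δ n k) (β := markedDyckSequences k (n - k))).1
      (congrArg ENat.toNat (hL.trans hR.symm))
  · change (rightIntervals δ n k).ncard = _
    rw [Set.ncard_def, hL, ENat.toNat_natCast, markedBallot_zero]
    obtain hkn | hkn := le_or_gt k n
    · congr 1 <;> omega
    · rw [Nat.choose_eq_zero_of_lt (by omega), Nat.choose_eq_zero_of_lt (by omega)]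
end
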